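/- arXiv:1406.3299 — 2 statements merged into one kernel-verified Lean document; each statement's English description precedes it below -/
import Mathlib

section
/- For every nonnegative integer n: N_V(k,5,5n+4) = p(5n+4)/5 for 0 ≤ k ≤ 4; N_V(k,7,7n+5) = p(7n+5)/7 for 0 ≤ k ≤ 6; and N_V(k,11,11n+6) = p(11n+6)/11 for 0 ≤ k ≤ 10. -/
/-!
The generating function of vector partitions by crank, `qPoch 1 1 1 * partGF z * partGF z⁻¹`,
specialises at `z = 1` to that of the partition function, so by orthogonality of the characters of
`ℤ/t` it is enough that its `n`-th coefficient vanishes at every primitive `t`-th root of unity `ζ`.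
Up to a factor which is a power series in `X ^ t`, and hence does not mix residue classes, the
generating function at `ζ` is a constant multiple of a sum of products of two theta series: Jacobi's
triple product gives one theta series times Euler's pentagonal series for `t = 5` and two theta
series for `t = 7`, and Winquist's identity gives the case `t = 11`. In each product the exponents
are values of a binary quadratic form that is anisotropic modulo `t`, so in the residue class of `n`
the index of one of the theta series is a fixed point modulo `t` of the symmetry `k ↦ 1 - k`, which
therefore pairs the terms off with opposite signs.
-/

/-- A vector partition `(π₁, π₂, π₃)`: `π₁` is a partition into distinct parts and
`π₂, π₃` are arbitrary partitions (each represented as a multiset of positive parts). -/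
def IsVectorPartition (x : Multiset ℕ × Multiset ℕ × Multiset ℕ) : Prop :=
  x.1.Nodup ∧ (∀ i ∈ x.1, 0 < i) ∧ (∀ i ∈ x.2.1, 0 < i) ∧ (∀ i ∈ x.2.2, 0 < i)

/-- The vector crank: `crank(π⃗) = #(π₂) − #(π₃)`. -/
def vcrank (x : Multiset ℕ × Multiset ℕ × Multiset ℕ) : ℤ :=
  (Multiset.card x.2.1 : ℤ) - (Multiset.card x.2.2 : ℤ)

/-- `NV k t n = Σ ω(π⃗)` over vector partitions `π⃗` of `n` with crank `≡ k (mod t)`,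
where the weight is `ω(π⃗) = (−1)^{#(π₁)}`: counted as (number with `#(π₁)` even) minus
(number with `#(π₁)` odd). -/
noncomputable def NV (k t : ℤ) (n : ℕ) : ℤ :=
  (Nat.card {x : Multiset ℕ × Multiset ℕ × Multiset ℕ //
      IsVectorPartition x ∧ x.1.sum + x.2.1.sum + x.2.2.sum = n ∧
      vcrank x ≡ k [ZMOD t] ∧ Even (Multiset.card x.1)} : ℤ) -
  (Nat.card {x : Multiset ℕ × Multiset ℕ × Multiset ℕ //
      IsVectorPartition x ∧ x.1.sum + x.2.1.sum + x.2.2.sum = n ∧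
      vcrank x ≡ k [ZMOD t] ∧ ¬ Even (Multiset.card x.1)} : ℤ)

open PowerSeries Filter
open scoped PowerSeries.WithPiTopology

section GaussBinom

/-- The Gaussian binomial coefficient at `q`, defined through its Pascal rule so that it makes sense
for an arbitrary element `q` of a semiring. -/
def gaussBinom {R : Type*} [CommSemiring R] (q : R) : ℕ → ℕ → R
  | _, 0 => 1
  | 0, _ + 1 => 0
  | n + 1, k + 1 => gaussBinom q n k + q ^ (k + 1) * gaussBinom q n (k + 1)

lemma gaussBinom_zero_right {R : Type*} [CommSemiring R] (q : R) (n : ℕ) :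
    gaussBinom q n 0 = 1 := by
  cases n <;> rfl

lemma gaussBinom_eq_zero_of_lt {R : Type*} [CommSemiring R] (q : R) {n k : ℕ} (h : n < k) :
    gaussBinom q n k = 0 := by
  induction n generalizing k with
  | zero => obtain ⟨k, rfl⟩ := Nat.exists_eq_succ_of_ne_zero h.ne'; rfl
  | succ n ih =>
    obtain ⟨k, rfl⟩ := Nat.exists_eq_succ_of_ne_zero (Nat.ne_zero_of_lt h)
    rw [gaussBinom, ih (by omega), ih (by omega), mul_zero, add_zero]

/-- The `q`-binomial theorem. -/
theorem prod_add_mul_pow_eq_sum_gaussBinom {R : Type*} [CommSemiring R] (q x y : R) (n : ℕ) :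
    ∏ k ∈ Finset.range n, (x + y * q ^ k) =
      ∑ k ∈ Finset.range (n + 1), gaussBinom q n k * q ^ k.choose 2 * x ^ (n - k) * y ^ k := by
  induction n generalizing y with
  | zero => simp [gaussBinom]
  | succ n ih =>
    have h := ih (y * q)
    simp only [mul_assoc y q, ← pow_succ'] at h
    have hx : ∑ k ∈ Finset.range (n + 1),
        gaussBinom q n k * q ^ (k + 1).choose 2 * x ^ (n + 1 - k) * y ^ k =
        x ^ (n + 1) + ∑ k ∈ Finset.range (n + 1),
          gaussBinom q n (k + 1) * q ^ (k + 2).choose 2 * x ^ (n - k) * y ^ (k + 1) := by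
      rw [Finset.sum_range_succ', Finset.sum_range_succ _ n,
        gaussBinom_eq_zero_of_lt q n.lt_succ_self]
      simp [gaussBinom_zero_right, add_comm (x ^ (n + 1))]
    rw [Finset.prod_range_succ', h, pow_zero, mul_one, mul_add, Finset.sum_mul, Finset.sum_mul,
      Finset.sum_range_succ' _ (n + 1)]
    calc _ = ∑ k ∈ Finset.range (n + 1),
              gaussBinom q n k * q ^ (k + 1).choose 2 * x ^ (n + 1 - k) * y ^ k +
            ∑ k ∈ Finset.range (n + 1),
              gaussBinom q n k * q ^ (k + 1).choose 2 * x ^ (n - k) * y ^ (k + 1) := by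
          congr 1 <;> refine Finset.sum_congr rfl fun k hk ↦ ?_
          · rw [Nat.succ_sub (Finset.mem_range_succ_iff.mp hk), pow_succ x,
              Nat.choose_succ_succ' k 1, Nat.choose_one_right]
            ring
          · rw [Nat.choose_succ_succ' k 1, Nat.choose_one_right]
            ring
      _ = _ := by
          rw [hx, add_assoc, ← Finset.sum_add_distrib, add_comm]
          congr 1
          · refine Finset.sum_congr rfl fun k _ ↦ ?_
            rw [gaussBinom, Nat.add_sub_add_right, Nat.choose_succ_succ' (k + 1) 1,
              Nat.choose_one_right]
            ring
          · simp [gaussBinom_zero_right]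

lemma gaussBinom_mul_prod_one_sub_pow {R : Type*} [CommRing R] (q : R) (n k : ℕ) :
    gaussBinom q n k * ∏ i ∈ Finset.range k, (1 - q ^ (i + 1)) =
      ∏ i ∈ Finset.range k, (1 - q ^ (n - i)) := by
  induction n generalizing k with
  | zero =>
    cases k with
    | zero => simp [gaussBinom]
    | succ k => simp [gaussBinom, Finset.prod_range_succ]
  | succ n ih =>
    cases k with
    | zero => simp [gaussBinom]
    | succ k =>
      have h := ih (k + 1)
      rw [Finset.prod_range_succ, Finset.prod_range_succ _ k] at h
      have h1 := ih k
      rw [Finset.prod_range_succ, Finset.prod_range_succ', gaussBinom]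
      simp only [Nat.add_sub_add_right, Nat.sub_zero]
      rcases le_or_gt k n with hk | hk
      · have e : q ^ (k + 1) * q ^ (n - k) = q ^ (n + 1) := by rw [← pow_add]; congr 1; omega
        linear_combination q ^ (k + 1) * h + (1 - q ^ (k + 1)) * h1 -
          (∏ i ∈ Finset.range k, (1 - q ^ (n - i))) * e
      · rw [gaussBinom_eq_zero_of_lt q hk, zero_mul] at h1
        rw [gaussBinom_eq_zero_of_lt q hk, gaussBinom_eq_zero_of_lt q (by omega : n < k + 1), ← h1]
        ring

lemma dvd_prod_one_sub_sub_one {R ι : Type*} [CommRing R] {a : R} (s : Finset ι) {f : ι → R}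
    (h : ∀ i ∈ s, a ∣ f i) : a ∣ ∏ i ∈ s, (1 - f i) - 1 := by
  have h1 : ∀ i ∈ s, Ideal.Quotient.mk (Ideal.span {a}) (1 - f i) = 1 := fun i hi ↦ by
    rw [map_sub, map_one, (Ideal.Quotient.eq_zero_iff_dvd _ _).mpr (h i hi), sub_zero]
  rw [← Ideal.Quotient.eq_zero_iff_dvd, map_sub, map_one, map_prod, Finset.prod_congr rfl h1,
    Finset.prod_const_one, sub_self]

lemma pow_dvd_gaussBinom_mul_prod_sub_one {R : Type*} [CommRing R] (q : R) {N k m s : ℕ}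
    (hk : s ≤ k + 1) (hm : s ≤ m + 1) (hN : s + k ≤ N + 1) :
    q ^ s ∣ gaussBinom q N k * ∏ i ∈ Finset.range m, (1 - q ^ (i + 1)) - 1 := by
  have htail : ∀ j, s ≤ j + 1 → q ^ s ∣ ∏ i ∈ Finset.Ico j (max k m), (1 - q ^ (i + 1)) - 1 :=
    fun j hj ↦ dvd_prod_one_sub_sub_one _ fun i hi ↦
      pow_dvd_pow q (hj.trans (Nat.succ_le_succ (Finset.mem_Ico.mp hi).1))
  have hnum : q ^ s ∣ ∏ i ∈ Finset.range k, (1 - q ^ (N - i)) - 1 :=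
    dvd_prod_one_sub_sub_one _ fun i hi ↦ pow_dvd_pow q (by have := Finset.mem_range.mp hi; omega)
  have hsplit := (Finset.prod_range_mul_prod_Ico (fun i ↦ 1 - q ^ (i + 1)) (le_max_left k m)).trans
    (Finset.prod_range_mul_prod_Ico (fun i ↦ 1 - q ^ (i + 1)) (le_max_right k m)).symm
  have hbinom := gaussBinom_mul_prod_one_sub_pow q N k
  obtain ⟨u, hu⟩ := htail k hk
  obtain ⟨v, hv⟩ := htail m hm
  obtain ⟨w, hw⟩ := hnum
  rw [sub_eq_iff_eq_add] at hu hv hw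
  rw [hu, hv] at hsplit
  rw [hw] at hbinom
  refine ⟨w + u + q ^ s * w * u - gaussBinom q N k * (∏ i ∈ Finset.range m, (1 - q ^ (i + 1))) * v,
    ?_⟩
  linear_combination (1 + q ^ s * u) * hbinom - gaussBinom q N k * hsplit

end GaussBinom

section QSeries

/-- The power series `∑ i, c i * X ^ e i`, meaningful when the exponents tend to infinity. -/
noncomputable def qSeries {ι R : Type*} [Semiring R] [TopologicalSpace R] (e : ι → ℕ) (c : ι → R) :
    R⟦X⟧ :=
  ∑' i, monomial (e i) (c i)

variable {ι κ R : Type*} {e : ι → ℕ} {f : κ → ℕ}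

lemma tendsto_add_cofinite_atTop (he : Tendsto e cofinite atTop) (hf : Tendsto f cofinite atTop) :
    Tendsto (fun x : ι × κ ↦ e x.1 + f x.2) cofinite atTop := by
  rw [← coprod_cofinite, Filter.coprod, tendsto_sup]
  exact ⟨tendsto_atTop_mono (fun _ ↦ Nat.le_add_right _ _) (he.comp tendsto_comap),
    tendsto_atTop_mono (fun _ ↦ Nat.le_add_left _ _) (hf.comp tendsto_comap)⟩

section Semiring

variable [Semiring R] [TopologicalSpace R]

lemma qSeries_comp_equiv (σ : κ ≃ ι) (e : ι → ℕ) (c : ι → R) :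
    qSeries (e ∘ σ) (c ∘ σ) = qSeries e c :=
  σ.tsum_eq fun i ↦ monomial (e i) (c i)

lemma summable_monomial (he : Tendsto e cofinite atTop) (c : ι → R) :
    Summable fun i ↦ monomial (e i) (c i) := by
  refine (WithPiTopology.summable_iff_summable_coeff ..).mpr fun d ↦
    summable_of_hasFiniteSupport ?_
  refine (eventually_cofinite.mp (he.eventually_gt_atTop d)).subset fun i hi hd ↦ hi ?_
  simp only [coeff_monomial, if_neg hd.ne]

variable [T2Space R]

lemma coeff_qSeries (he : Tendsto e cofinite atTop) (c : ι → R) (n : ℕ) :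
    coeff n (qSeries e c) = ∑' i, if n = e i then c i else 0 := by
  rw [qSeries, (summable_monomial he c).map_tsum _ (WithPiTopology.continuous_coeff R n)]
  simp only [coeff_monomial]

end Semiring

variable [CommRing R] [TopologicalSpace R] [IsTopologicalRing R] [T2Space R]

lemma qSeries_mul_qSeries (he : Tendsto e cofinite atTop) (hf : Tendsto f cofinite atTop)
    (c : ι → R) (d : κ → R) :
    qSeries e c * qSeries f d = qSeries (fun x : ι × κ ↦ e x.1 + f x.2) fun x ↦ c x.1 * d x.2 := by
  have h := summable_monomial (tendsto_add_cofinite_atTop he hf) fun x ↦ c x.1 * d x.2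
  simp only [← monomial_mul_monomial] at h
  rw [qSeries, qSeries, (summable_monomial he c).tsum_mul_tsum (summable_monomial hf d) h, qSeries]
  simp only [monomial_mul_monomial]

lemma C_mul_qSeries (he : Tendsto e cofinite atTop) (r : R) (c : ι → R) :
    C r * qSeries e c = qSeries e fun i ↦ r * c i := by
  simp only [qSeries, ← (summable_monomial he c).tsum_mul_left, ← monomial_zero_eq_C_apply,
    monomial_mul_monomial, zero_add]

lemma X_pow_mul_qSeries (he : Tendsto e cofinite atTop) (n : ℕ) (c : ι → R) :
    X ^ n * qSeries e c = qSeries (fun i ↦ n + e i) c := by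
  simp only [qSeries, ← (summable_monomial he c).tsum_mul_left, X_pow_eq, monomial_mul_monomial,
    one_mul]

lemma qSeries_eq_sum_fiber {γ : Type*} [Fintype γ] (φ : γ × κ ≃ ι) (he : Tendsto e cofinite atTop)
    (c : ι → R) :
    qSeries e c = ∑ r, qSeries (fun x ↦ e (φ (r, x))) fun x ↦ c (φ (r, x)) := by
  have hs : ∀ r, Summable fun x ↦ monomial (e (φ (r, x))) (c (φ (r, x))) := fun r ↦
    summable_monomial (he.comp (φ.injective.comp (Prod.mk_right_injective r)).tendsto_cofinite) _
  simpa [qSeries, tsum_fintype] using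
    (φ.tsum_eq fun i ↦ monomial (e i) (c i)).symm.trans
      ((φ.summable_iff.mpr (summable_monomial he c)).tsum_prod' hs)

end QSeries

section QPochhammer

lemma continuous_expand {R : Type*} [CommRing R] [TopologicalSpace R] {t : ℕ} (ht : t ≠ 0) :
    Continuous (expand t ht : R⟦X⟧ →ₐ[R] R⟦X⟧) := by
  refine continuous_iff_continuousAt.mpr fun F ↦
    (WithPiTopology.tendsto_iff_coeff_tendsto ..).mpr fun n ↦ ?_
  simp only [coeff_expand]
  split_ifs
  · exact (WithPiTopology.continuous_coeff R _).continuousAt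
  · exact tendsto_const_nhds

/-- The infinite `q`-Pochhammer symbol `(z q ^ a; q ^ d)_∞ = ∏ (1 - z q ^ (a + d n))` as a power
series in `q = X`. -/
noncomputable def qPoch {R : Type*} [CommRing R] [TopologicalSpace R] (a d : ℕ) (z : R) : R⟦X⟧ :=
  ∏' n : ℕ, (1 - C z * X ^ (a + d * n))

variable {R : Type*} [CommRing R] [TopologicalSpace R] {a d : ℕ}

lemma multipliable_qPoch (hd : 0 < d) (a : ℕ) (z : R) :
    Multipliable fun n : ℕ ↦ (1 - C z * X ^ (a + d * n) : R⟦X⟧) := by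
  nontriviality R
  simp_rw [sub_eq_add_neg]
  apply WithPiTopology.multipliable_one_add_of_tendsto_order_atTop_nhds_top
  refine ENat.tendsto_nhds_top_iff_natCast_lt.mpr fun n ↦ eventually_atTop.mpr
    ⟨n + 1, fun m hm ↦ ?_⟩
  rw [order_neg]
  grw [← le_order_mul]
  refine lt_add_of_nonneg_of_lt (by simp) ?_
  rw [order_X_pow]
  norm_cast
  nlinarith

variable [T2Space R]

lemma constantCoeff_qPoch (ha : 0 < a) (hd : 0 < d) (z : R) : constantCoeff (qPoch a d z) = 1 := by
  rw [qPoch, (multipliable_qPoch hd a z).map_tprod constantCoeff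
    (WithPiTopology.continuous_constantCoeff R)]
  simp [ha.ne']

lemma qPoch_ne_zero [Nontrivial R] (ha : 0 < a) (hd : 0 < d) (z : R) : qPoch a d z ≠ 0 :=
  fun h ↦ by simpa [h] using constantCoeff_qPoch ha hd z

lemma expand_qPoch {t : ℕ} (ht : t ≠ 0) (hd : 0 < d) (a : ℕ) (z : R) :
    expand t ht (qPoch a d z) = qPoch (t * a) (t * d) z := by
  rw [qPoch, (multipliable_qPoch hd a z).map_tprod (expand t ht : R⟦X⟧ →ₐ[R] R⟦X⟧)
    (continuous_expand ht), qPoch]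
  simp only [map_sub, map_one, map_mul, map_pow, expand_C, expand_X, ← pow_mul, mul_add, mul_assoc]

variable [IsTopologicalRing R]

lemma qPoch_eq_mul_qPoch (hd : 0 < d) (a : ℕ) (z : R) :
    qPoch a d z = (1 - C z * X ^ a) * qPoch (a + d) d z := by
  have hshift (n : ℕ) : a + d * (n + 1) = a + d + d * n := by ring
  have htail : Multipliable fun n : ℕ ↦ (1 - C z * X ^ (a + d * (n + 1)) : R⟦X⟧) := by
    simpa only [hshift] using multipliable_qPoch hd (a + d) z
  have h := tprod_eq_zero_mul' (f := fun n : ℕ ↦ (1 - C z * X ^ (a + d * n) : R⟦X⟧)) htail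
  simpa only [qPoch, hshift, mul_zero, add_zero] using h

lemma prod_qPoch_pow_mul [IsDomain R] {t : ℕ} (ht : 0 < t) {ζ : R}
    (hζ : IsPrimitiveRoot ζ t) (hd : 0 < d) (a : ℕ) (z : R) :
    ∏ k ∈ Finset.range t, qPoch a d (ζ ^ k * z) = qPoch (t * a) (t * d) (z ^ t) := by
  have hfactor (n : ℕ) : ∏ k ∈ Finset.range t, (1 - C (ζ ^ k * z) * X ^ n) =
      (1 - C (z ^ t) * X ^ (t * n) : R⟦X⟧) := by
    have h := congrArg (Polynomial.eval 1) (X_pow_sub_C_eq_prod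
      (hζ.map_of_injective (f := (C : R →+* R⟦X⟧)) C_injective) ht (α := C z * X ^ n) rfl)
    simp only [Polynomial.eval_sub, Polynomial.eval_pow, Polynomial.eval_X, Polynomial.eval_C,
      Polynomial.eval_prod, one_pow, mul_pow, ← map_pow, ← pow_mul] at h
    rw [mul_comm t, h]
    simp only [map_mul, map_pow, mul_assoc]
  simp only [qPoch]
  rw [← Multipliable.tprod_finsetProd fun k _ ↦ multipliable_qPoch hd a _]
  simp only [hfactor, mul_add, mul_assoc]

end QPochhammer

section Theta

/-- The exponent `a k (k + 1) / 2 + b k (k - 1) / 2` of `q` in the `k`-th term of Ramanujan's theta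
function `f(z q ^ a, z⁻¹ q ^ b)`. -/
def thetaExp (a b : ℕ) (k : ℤ) : ℕ := ((a * (k * (k + 1)) + b * (k * (k - 1))) / 2).toNat

/-- Ramanujan's theta function `f(z q ^ a, z⁻¹ q ^ b)` as a power series in `q = X`. -/
noncomputable def thetaSeries {K : Type*} [DivisionRing K] [TopologicalSpace K] (a b : ℕ) (z : K) :
    K⟦X⟧ :=
  qSeries (thetaExp a b) fun k ↦ z ^ k

variable {a b : ℕ}

lemma two_mul_thetaExp (a b : ℕ) (k : ℤ) :
    2 * (thetaExp a b k : ℤ) = a * (k * (k + 1)) + b * (k * (k - 1)) := by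
  have hnonneg : ∀ j : ℤ, 0 ≤ j * (j + 1) := fun j ↦ by
    rcases le_or_gt 0 j with h | h <;> nlinarith
  have hdvd : (2 : ℤ) ∣ a * (k * (k + 1)) + b * (k * (k - 1)) :=
    dvd_add ((Int.even_mul_succ_self k).two_dvd.mul_left _)
      ((Int.even_mul_pred_self k).two_dvd.mul_left _)
  have := hnonneg (-k)
  rw [thetaExp, Int.toNat_of_nonneg (Int.ediv_nonneg ?_ zero_le_two), Int.mul_ediv_cancel' hdvd]
  exact add_nonneg (mul_nonneg a.cast_nonneg (hnonneg k))
    (mul_nonneg b.cast_nonneg (by linarith))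

lemma thetaExp_neg (a b : ℕ) (k : ℤ) : thetaExp a b (-k) = thetaExp b a k := by
  zify
  linarith [two_mul_thetaExp a b (-k), two_mul_thetaExp b a k]

lemma natAbs_le_thetaExp_add_one (hab : 0 < a + b) (k : ℤ) : k.natAbs ≤ thetaExp a b k + 1 := by
  have h := two_mul_thetaExp a b k
  have hab' : (1 : ℤ) ≤ a + b := by exact_mod_cast hab
  have hmul : 0 ≤ |k| * (|k| - 1) := by
    rcases (abs_nonneg k).eq_or_lt with h0 | h0
    · simp [← h0]
    · exact mul_nonneg h0.le (by omega)
  have hpos : |k| * (|k| - 1) ≤ k * (k + 1) := by nlinarith [neg_abs_le k, abs_mul_abs_self k]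
  have hneg : |k| * (|k| - 1) ≤ k * (k - 1) := by nlinarith [le_abs_self k, abs_mul_abs_self k]
  have ha := mul_le_mul_of_nonneg_left hpos a.cast_nonneg
  have hb := mul_le_mul_of_nonneg_left hneg b.cast_nonneg
  zify
  nlinarith [mul_le_mul_of_nonneg_right hab' hmul, sq_nonneg (|k| - 1), sq_nonneg (|k| - 2)]

lemma tendsto_thetaExp (hab : 0 < a + b) : Tendsto (thetaExp a b) cofinite atTop := by
  refine tendsto_atTop.mpr fun n ↦
    eventually_cofinite.mpr ((Set.finite_Icc (-n : ℤ) n).subset fun k hk ↦ ?_)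
  have := natAbs_le_thetaExp_add_one hab k
  simp only [Set.mem_ofPred_eq, not_le] at hk
  exact Set.mem_Icc.mpr (by omega)

lemma thetaSeries_swap {K : Type*} [DivisionRing K] [TopologicalSpace K] (a b : ℕ) (z : K) :
    thetaSeries b a z = thetaSeries a b z⁻¹ := by
  rw [thetaSeries, thetaSeries, ← qSeries_comp_equiv (Equiv.neg ℤ)]
  congr 1 <;> ext k
  · exact thetaExp_neg b a k
  · simp

section JacobiTripleProduct

variable {K : Type*} [Field K]

lemma prod_X_pow_add_eq_prod_one_sub_inv (a b n : ℕ) {z : K} (hz : z ≠ 0) :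
    ∏ k ∈ Finset.range n, (X ^ ((a + b) * n) + C (-z) * X ^ a * (X ^ (a + b)) ^ k) =
      C ((-z) ^ n) * X ^ (a * n + (a + b) * n.choose 2) *
        ∏ k ∈ Finset.range n, (1 - C z⁻¹ * X ^ (b + (a + b) * k) : K⟦X⟧) := by
  have hC : (C (-z) * C z⁻¹ : K⟦X⟧) = -1 := by
    rw [← map_mul, neg_mul, mul_inv_cancel₀ hz, map_neg, map_one]
  have hpow : C ((-z) ^ n) * X ^ (a * n + (a + b) * n.choose 2) =
      ∏ k ∈ Finset.range n, (C (-z) * X ^ (a + (a + b) * k) : K⟦X⟧) := by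
    rw [Finset.prod_mul_distrib, Finset.prod_pow_eq_pow_sum, Finset.sum_add_distrib,
      ← Finset.mul_sum, Finset.sum_range_id, Nat.choose_two_right]
    simp [mul_comm]
  rw [hpow, ← Finset.prod_range_reflect (fun k ↦ 1 - C z⁻¹ * X ^ (b + (a + b) * k)),
    ← Finset.prod_mul_distrib]
  refine Finset.prod_congr rfl fun k hk ↦ ?_
  have hexp : (a + b) * n = a + (a + b) * k + (b + (a + b) * (n - 1 - k)) := by
    obtain ⟨m, rfl⟩ := Nat.exists_eq_add_of_lt (Finset.mem_range.mp hk)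
    rw [show k + m + 1 - 1 - k = m by omega]
    ring
  rw [hexp]
  linear_combination (X ^ (a + (a + b) * k + (b + (a + b) * (n - 1 - k)))) * hC

lemma prod_X_pow_add_eq_prod_one_sub (a b n : ℕ) (z : K) :
    ∏ k ∈ Finset.range n, (X ^ ((a + b) * n) + C (-z) * X ^ a * (X ^ (a + b)) ^ (n + k)) =
      X ^ ((a + b) * n ^ 2) *
        ∏ k ∈ Finset.range n, (1 - C z * X ^ (a + (a + b) * k) : K⟦X⟧) := by
  have hpow : X ^ ((a + b) * n ^ 2) = ∏ _k ∈ Finset.range n, (X ^ ((a + b) * n) : K⟦X⟧) := by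
    rw [Finset.prod_const, Finset.card_range]
    ring
  rw [hpow, ← Finset.prod_mul_distrib]
  refine Finset.prod_congr rfl fun k _ ↦ ?_
  rw [map_neg]
  ring

lemma prod_range_X_pow_add (a b n : ℕ) {z : K} (hz : z ≠ 0) :
    ∏ k ∈ Finset.range (2 * n), (X ^ ((a + b) * n) + C (-z) * X ^ a * (X ^ (a + b)) ^ k) =
      C ((-z) ^ n) * X ^ (a * n + (a + b) * (n.choose 2 + n ^ 2)) *
        ((∏ k ∈ Finset.range n, (1 - C z * X ^ (a + (a + b) * k))) *
          ∏ k ∈ Finset.range n, (1 - C z⁻¹ * X ^ (b + (a + b) * k)) : K⟦X⟧) := by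
  rw [two_mul, Finset.prod_range_add, prod_X_pow_add_eq_prod_one_sub_inv a b n hz,
    prod_X_pow_add_eq_prod_one_sub]
  ring

/-- The finite form of the Jacobi triple product. -/
lemma prod_mul_prod_eq_sum_gaussBinom (a b n : ℕ) {z : K} (hz : z ≠ 0) :
    (∏ k ∈ Finset.range n, (1 - C z * X ^ (a + (a + b) * k))) *
        ∏ k ∈ Finset.range n, (1 - C z⁻¹ * X ^ (b + (a + b) * k)) =
      ∑ j ∈ Finset.Icc (-n : ℤ) n, gaussBinom (X ^ (a + b)) (2 * n) (n + j).toNat *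
        monomial (thetaExp a b j) ((-z) ^ j) := by
  have hne : (C ((-z) ^ n) * X ^ (a * n + (a + b) * (n.choose 2 + n ^ 2)) : K⟦X⟧) ≠ 0 :=
    mul_ne_zero ((map_ne_zero_iff _ C_injective).mpr (pow_ne_zero _ (neg_ne_zero.mpr hz)))
      (pow_ne_zero _ X_ne_zero)
  refine mul_left_cancel₀ hne ?_
  rw [← prod_range_X_pow_add a b n hz, prod_add_mul_pow_eq_sum_gaussBinom, Finset.mul_sum]
  refine Finset.sum_nbij' (fun k ↦ (k : ℤ) - n) (fun j ↦ (n + j).toNat)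
    (fun k hk ↦ ?_) (fun j hj ↦ ?_) (fun k _ ↦ ?_) (fun j hj ↦ ?_) fun k hk ↦ ?_
  all_goals try simp only [Finset.mem_range, Finset.mem_Icc] at *; omega
  replace hk := Finset.mem_range_succ_iff.mp hk
  have hexp : (a + b) * k.choose 2 + (a + b) * n * (2 * n - k) + a * k =
      a * n + (a + b) * (n.choose 2 + n ^ 2) + thetaExp a b (k - n) := by
    have h := congrArg (Int.cast : ℤ → ℚ) (two_mul_thetaExp a b (k - n))
    push_cast at h
    qify [hk]
    rw [Nat.cast_choose_two, Nat.cast_choose_two]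
    linarith
  have hC : (C ((-z) ^ n) * C ((-z) ^ (k - n : ℤ)) : K⟦X⟧) = C ((-z) ^ k) := by
    rw [← map_mul, ← zpow_natCast, ← zpow_add₀ (neg_ne_zero.mpr hz), add_sub_cancel, zpow_natCast]
  have hX : ((X ^ (a + b)) ^ k.choose 2 * (X ^ ((a + b) * n)) ^ (2 * n - k) * X ^ (a * k) : K⟦X⟧) =
      X ^ (a * n + (a + b) * (n.choose 2 + n ^ 2)) * X ^ thetaExp a b (k - n) := by
    rw [← pow_mul, ← pow_mul, ← pow_add, ← pow_add, hexp, pow_add]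
  rw [add_sub_cancel, Int.toNat_natCast, monomial_eq_C_mul_X_pow, mul_pow, ← map_pow, ← hC,
    ← pow_mul X a]
  linear_combination C ((-z) ^ n) * C ((-z) ^ (k - n : ℤ)) * gaussBinom (X ^ (a + b)) (2 * n) k * hX

lemma X_pow_dvd_sum_gaussBinom_sub (hab : 0 < a + b) (n : ℕ) (z : K) :
    X ^ n ∣ (∑ j ∈ Finset.Icc (-n : ℤ) n, gaussBinom (X ^ (a + b)) (2 * n) (n + j).toNat *
        monomial (thetaExp a b j) (z ^ j)) * ∏ i ∈ Finset.range n, (1 - (X ^ (a + b)) ^ (i + 1)) -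
      ∑ j ∈ Finset.Icc (-n : ℤ) n, monomial (thetaExp a b j) (z ^ j) := by
  rw [Finset.sum_mul, ← Finset.sum_sub_distrib]
  refine Finset.dvd_sum fun j hj ↦ ?_
  rw [Finset.mem_Icc] at hj
  have hdvd := pow_dvd_gaussBinom_mul_prod_sub_one (X ^ (a + b) : K⟦X⟧) (N := 2 * n)
    (k := (n + j).toNat) (m := n) (s := n + 1 - j.natAbs) (by omega) (by omega) (by omega)
  have hexp : n ≤ (a + b) * (n + 1 - j.natAbs) + thetaExp a b j := by
    have := natAbs_le_thetaExp_add_one hab j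
    have := Nat.le_mul_of_pos_left (n + 1 - j.natAbs) hab
    omega
  have hmono : X ^ thetaExp a b j ∣ monomial (thetaExp a b j) (z ^ j) :=
    ⟨C (z ^ j), by rw [monomial_eq_C_mul_X_pow, mul_comm]⟩
  rw [← pow_mul] at hdvd
  convert (pow_dvd_pow X hexp).trans ((pow_add X _ _).dvd.trans (mul_dvd_mul hdvd hmono)) using 1
  ring

lemma tendsto_of_X_pow_dvd_sub {R : Type*} [CommRing R] [TopologicalSpace R] [IsTopologicalRing R]
    {u v : ℕ → R⟦X⟧} {F : R⟦X⟧} (huv : ∀ n, X ^ n ∣ u n - v n) (hu : Tendsto u atTop (nhds F)) :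
    Tendsto v atTop (nhds F) := by
  refine (WithPiTopology.tendsto_iff_coeff_tendsto ..).mpr fun m ↦
    ((WithPiTopology.tendsto_iff_coeff_tendsto ..).mp hu m).congr' ?_
  filter_upwards [eventually_gt_atTop m] with n hn
  rw [← sub_eq_zero, ← map_sub]
  exact X_pow_dvd_iff.mp (huv n) m hn

variable [TopologicalSpace K] [IsTopologicalRing K] [T2Space K]

/-- The Jacobi triple product identity. -/
theorem thetaSeries_neg_eq_qPoch (hab : 0 < a + b) {z : K} (hz : z ≠ 0) :
    thetaSeries a b (-z) = qPoch (a + b) (a + b) 1 * qPoch a (a + b) z * qPoch b (a + b) z⁻¹ := by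
  have hprod := fun c w ↦ (multipliable_qPoch (R := K) hab c w).hasProd.tendsto_prod_nat
  have hIcc : Tendsto (fun n : ℕ ↦ Finset.Icc (-n : ℤ) n) atTop atTop :=
    tendsto_atTop_finset_of_monotone
      (fun m n h ↦ Finset.Icc_subset_Icc (by gcongr) (by gcongr))
      fun j ↦ ⟨j.natAbs, Finset.mem_Icc.mpr (by omega)⟩
  have hsum := (summable_monomial (tendsto_thetaExp hab) fun j ↦ (-z) ^ j).hasSum.comp hIcc
  have hlim := (((hprod a z).mul (hprod b z⁻¹)).mul (hprod (a + b) 1)).congr fun n ↦ by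
    rw [prod_mul_prod_eq_sum_gaussBinom a b n hz]
  rw [mul_assoc, mul_comm]
  refine tendsto_nhds_unique hsum (tendsto_of_X_pow_dvd_sub (fun n ↦ ?_) hlim)
  simpa only [Function.comp_apply, map_one, one_mul, ← pow_mul, mul_add, mul_one,
    add_comm (a + b)] using
    X_pow_dvd_sum_gaussBinom_sub hab n (-z)

end JacobiTripleProduct

end Theta

section Winquist

lemma bijective_lattice_cosets {c : ℕ} {s : Fin (c + 1) → ℤ × ℤ}
    (hs : Function.Bijective fun r ↦ ((s r).1 - (s r).2 : ZMod (c + 1))) :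
    Function.Bijective fun x : Fin (c + 1) × ℤ × ℤ ↦
      ((x.2.1 + c * x.2.2 + (s x.1).1, x.2.1 - x.2.2 + (s x.1).2) : ℤ × ℤ) := by
  constructor
  · rintro ⟨r, k, l⟩ ⟨r', k', l'⟩ h
    obtain ⟨h₁, h₂⟩ := Prod.mk.injEq .. ▸ h
    have hdiff : (c + 1) * l + ((s r).1 - (s r).2) = (c + 1) * l' + ((s r').1 - (s r').2) := by
      linarith
    obtain rfl : r = r' := hs.1 <| by
      simpa using congrArg (Int.cast : ℤ → ZMod (c + 1)) hdiff
    obtain rfl : l = l' := mul_left_cancel₀ (by omega : (c + 1 : ℤ) ≠ 0) (by linarith)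
    simpa using h₂
  · rintro ⟨m, n⟩
    obtain ⟨r, hr⟩ := hs.2 (m - n)
    obtain ⟨l, hl⟩ : ((c + 1 : ℕ) : ℤ) ∣ m - n - ((s r).1 - (s r).2) := by
      rw [← ZMod.intCast_zmod_eq_zero_iff_dvd]
      push_cast
      rw [← hr, sub_self]
    push_cast at hl
    exact ⟨(r, n + l - (s r).2, l), Prod.ext (by linarith) (by ring)⟩

variable {K : Type*} [Field K] [TopologicalSpace K] [IsTopologicalRing K] [T2Space K]

/-- Schröter's dissection of a product of two theta series. -/
theorem thetaSeries_mul_thetaSeries {a b a' b' c : ℕ} (hab : 0 < a + b) (hab' : 0 < a' + b')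
    {s : Fin (c + 1) → ℤ × ℤ} {m : Fin (c + 1) → ℕ} {p p' : Fin (c + 1) → ℕ × ℕ}
    (hs : Function.Bijective fun r ↦ ((s r).1 - (s r).2 : ZMod (c + 1)))
    (hp : ∀ r, 0 < (p r).1 + (p r).2) (hp' : ∀ r, 0 < (p' r).1 + (p' r).2)
    (hexp : ∀ r k l, thetaExp a b (k + c * l + (s r).1) + thetaExp a' b' (k - l + (s r).2) =
      m r + (thetaExp (p r).1 (p r).2 k + thetaExp (p' r).1 (p' r).2 l))
    {x y : K} (hx : x ≠ 0) (hy : y ≠ 0) :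
    thetaSeries a b x * thetaSeries a' b' y = ∑ r, C (x ^ (s r).1 * y ^ (s r).2) * X ^ m r *
      (thetaSeries (p r).1 (p r).2 (x * y) * thetaSeries (p' r).1 (p' r).2 (x ^ c / y)) := by
  have htend := tendsto_add_cofinite_atTop (tendsto_thetaExp hab) (tendsto_thetaExp hab')
  simp only [thetaSeries]
  rw [qSeries_mul_qSeries (tendsto_thetaExp hab) (tendsto_thetaExp hab'),
    qSeries_eq_sum_fiber (Equiv.ofBijective _ (bijective_lattice_cosets hs)) htend]
  refine Finset.sum_congr rfl fun r _ ↦ ?_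
  have htend' := tendsto_add_cofinite_atTop (tendsto_thetaExp (hp r)) (tendsto_thetaExp (hp' r))
  rw [qSeries_mul_qSeries (tendsto_thetaExp (hp r)) (tendsto_thetaExp (hp' r)), mul_assoc,
    X_pow_mul_qSeries htend', C_mul_qSeries (tendsto_atTop_mono (fun _ ↦ le_add_self) htend')]
  congr 1 <;> ext ⟨k, l⟩
  · exact hexp r k l
  · simp only [Equiv.ofBijective_apply, div_zpow, mul_zpow, ← zpow_natCast, ← zpow_mul,
      zpow_add₀ hx, zpow_add₀ hy, zpow_sub₀ hy]
    ring

lemma thetaSeries_mul_thetaSeries_div {a b : K} (ha : a ≠ 0) (hb : b ≠ 0) :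
    thetaSeries 0 1 (-(a * b)) * thetaSeries 0 1 (-(a / b)) =
      thetaSeries 0 2 (a ^ 2) * thetaSeries 1 1 (b ^ 2) -
        C (a / b) * (thetaSeries 1 1 (a ^ 2) * thetaSeries 0 2 (b ^ 2)) := by
  rw [thetaSeries_mul_thetaSeries (c := 1) (s := ![(0, 0), (0, 1)]) (m := ![0, 0])
    (p := ![(0, 2), (1, 1)]) (p' := ![(1, 1), (0, 2)]) one_pos one_pos (by decide) (by decide)
    (by decide) (fun r k l ↦ ?_) (neg_ne_zero.mpr (mul_ne_zero ha hb))
    (neg_ne_zero.mpr (div_ne_zero ha hb))]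
  · have hmul : -(a * b) * -(a / b) = a ^ 2 := by field_simp
    have hdiv : (-(a * b)) ^ 1 / -(a / b) = b ^ 2 := by field_simp
    simp only [hmul, hdiv]
    simp [Fin.sum_univ_two, -map_div₀]
    ring
  · zify
    refine mul_left_cancel₀ two_ne_zero ?_
    simp only [mul_add, two_mul_thetaExp]
    fin_cases r <;> simp <;> ring

/-- The sum side `∑ (-1) ^ k q ^ (k (3 k + 1) / 2) (a ^ (3 k) - a ^ (1 - 3 k))` of the quintuple
product identity. -/
noncomputable def quintuple (a : K) : K⟦X⟧ :=
  thetaSeries 1 2 (-a ^ 3) - C a * thetaSeries 2 1 (-a ^ 3)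

lemma thetaSeries_mul_thetaSeries_one_one {a : K} (ha : a ≠ 0) :
    thetaSeries 0 1 (-a) * thetaSeries 1 1 (a ^ 2) =
      thetaSeries 2 4 1 * quintuple a -
        C a⁻¹ * X * thetaSeries 0 6 1 * thetaSeries 0 3 (-a ^ 3) := by
  rw [thetaSeries_mul_thetaSeries (c := 2) (s := ![(0, 0), (1, 0), (-1, 0)]) (m := ![0, 0, 1])
    (p := ![(1, 2), (2, 1), (0, 3)]) (p' := ![(2, 4), (4, 2), (0, 6)]) one_pos two_pos (by decide)
    (by decide) (by decide) (fun r k l ↦ ?_) (neg_ne_zero.mpr ha) (pow_ne_zero 2 ha)]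
  · have hmul : -a * a ^ 2 = -a ^ 3 := by ring
    have hdiv : (-a) ^ 2 / a ^ 2 = 1 := by field_simp
    simp only [hmul, hdiv]
    simp [Fin.sum_univ_three, quintuple, thetaSeries_swap 2 4]
    ring
  · zify
    refine mul_left_cancel₀ two_ne_zero ?_
    simp only [mul_add, two_mul_thetaExp]
    fin_cases r <;> simp <;> ring

lemma thetaSeries_mul_thetaSeries_zero_two {a : K} (ha : a ≠ 0) :
    thetaSeries 0 1 (-a) * thetaSeries 0 2 (a ^ 2) =
      thetaSeries 3 3 1 * thetaSeries 0 3 (-a ^ 3) -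
        C a * thetaSeries 1 5 1 * quintuple a := by
  rw [thetaSeries_mul_thetaSeries (c := 2) (s := ![(0, 0), (1, 0), (0, 1)]) (m := ![0, 0, 0])
    (p := ![(0, 3), (1, 2), (2, 1)]) (p' := ![(3, 3), (5, 1), (1, 5)]) one_pos two_pos (by decide)
    (by decide) (by decide) (fun r k l ↦ ?_) (neg_ne_zero.mpr ha) (pow_ne_zero 2 ha)]
  · have hmul : -a * a ^ 2 = -a ^ 3 := by ring
    have hdiv : (-a) ^ 2 / a ^ 2 = 1 := by field_simp
    simp only [hmul, hdiv]
    simp [Fin.sum_univ_three, quintuple, thetaSeries_swap 1 5]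
    ring
  · zify
    refine mul_left_cancel₀ two_ne_zero ?_
    simp only [mul_add, two_mul_thetaExp]
    fin_cases r <;> simp <;> ring

/-- The factor of Winquist's product that does not depend on its two parameters, as a combination of
theta constants. -/
noncomputable def winquistConst (K : Type*) [Field K] [TopologicalSpace K] : K⟦X⟧ :=
  thetaSeries 2 4 1 * thetaSeries 3 3 1 - X * thetaSeries 0 6 1 * thetaSeries 1 5 1

lemma four_thetaSeries_eq_winquistConst_mul {a b : K} (ha : a ≠ 0) (hb : b ≠ 0) :
    thetaSeries 0 1 (-a) * thetaSeries 0 1 (-b) * thetaSeries 0 1 (-(a * b)) *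
        thetaSeries 0 1 (-(a / b)) =
      winquistConst K * (thetaSeries 0 3 (-a ^ 3) * quintuple b -
        C (a / b) * (quintuple a * thetaSeries 0 3 (-b ^ 3))) := by
  have ha₁ := thetaSeries_mul_thetaSeries_one_one ha
  have ha₂ := thetaSeries_mul_thetaSeries_zero_two ha
  have hb₁ := thetaSeries_mul_thetaSeries_one_one hb
  have hb₂ := thetaSeries_mul_thetaSeries_zero_two hb
  have hCa : (C a * C a⁻¹ : K⟦X⟧) = 1 := by rw [← map_mul, mul_inv_cancel₀ ha, map_one]
  have hCb : (C b * C b⁻¹ : K⟦X⟧) = 1 := by rw [← map_mul, mul_inv_cancel₀ hb, map_one]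
  rw [mul_assoc _ (thetaSeries 0 1 (-(a * b))), thetaSeries_mul_thetaSeries_div ha hb, mul_sub,
    mul_mul_mul_comm, mul_left_comm _ (C (a / b)), mul_mul_mul_comm _ _ (thetaSeries 1 1 (a ^ 2)),
    ha₁, ha₂, hb₁, hb₂, winquistConst, div_eq_mul_inv, map_mul]
  generalize thetaSeries 2 4 (1 : K) = w, thetaSeries 3 3 (1 : K) = x, thetaSeries 0 6 (1 : K) = y,
    thetaSeries 1 5 (1 : K) = z, quintuple a = s, quintuple b = t, thetaSeries 0 3 (-a ^ 3) = u,
    thetaSeries 0 3 (-b ^ 3) = v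
  linear_combination (x * u * v * C b⁻¹ * X * y - u * z * t * X * y * (C b * C b⁻¹)) * hCa +
    (C a * z * s * w * t - u * z * t * X * y) * hCb

end Winquist

section RootsOfUnity

variable {K : Type*} [Field K] [TopologicalSpace K] [T2Space K]

/-- Euler's pentagonal number theorem. -/
theorem thetaSeries_one_two_neg_one : thetaSeries 1 2 (-1 : K) = qPoch 1 1 1 := by
  have h := (summable_monomial (tendsto_thetaExp (show 0 < 1 + 2 by norm_num))
    fun k ↦ (-1 : K) ^ k).hasSum
  rw [qPoch]
  simp only [map_one, one_mul, add_comm 1]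
  rw [WithPiTopology.tprod_one_sub_X_pow]
  refine h.unique ?_
  convert WithPiTopology.hasSum_pentagonalSeries K using 2 with k
  have hexp : thetaExp 1 2 k = pentagonal k := by
    have hk := two_mul_thetaExp 1 2 k
    push_cast at hk
    zify
    linarith [two_mul_natCast_pentagonal k]
  rw [monomial_eq_C_mul_X_pow, hexp]
  rcases Int.even_or_odd k with hk | hk
  · simp [hk.neg_one_zpow, Int.negOnePow_even _ hk]
  · simp [hk.neg_one_zpow, Int.negOnePow_odd _ hk]

lemma quintuple_of_pow_three_eq_one {ω : K} (hω : ω ^ 3 = 1) :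
    quintuple ω = C (1 - ω) * qPoch 1 1 1 := by
  rw [quintuple, hω, thetaSeries_swap 1 2, inv_neg_one, thetaSeries_one_two_neg_one, map_sub,
    map_one]
  ring

variable [IsTopologicalRing K]

lemma thetaSeries_zero_neg {d : ℕ} (hd : 0 < d) {z : K} (hz : z ≠ 0) :
    thetaSeries 0 d (-z) = C (1 - z) * (qPoch d d 1 * qPoch d d z * qPoch d d z⁻¹) := by
  rw [thetaSeries_neg_eq_qPoch (by omega) hz, zero_add, qPoch_eq_mul_qPoch hd 0, zero_add, map_sub,
    map_one, pow_zero, mul_one]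
  ring

lemma thetaSeries_zero_neg_one {d : ℕ} (hd : 0 < d) : thetaSeries 0 d (-1 : K) = 0 := by
  rw [thetaSeries_zero_neg hd one_ne_zero, sub_self, map_zero, zero_mul]

lemma thetaSeries_zero_neg_ne_zero {d : ℕ} (hd : 0 < d) {z : K} (hz : z ≠ 0) (hz' : z ≠ 1) :
    thetaSeries 0 d (-z) ≠ 0 := by
  rw [thetaSeries_zero_neg hd hz]
  exact mul_ne_zero ((map_ne_zero_iff _ C_injective).mpr (sub_ne_zero.mpr hz'.symm)) <|
    mul_ne_zero (mul_ne_zero (qPoch_ne_zero hd hd _) (qPoch_ne_zero hd hd _))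
      (qPoch_ne_zero hd hd _)

lemma prod_thetaSeries_pow_mul {a b t : ℕ} (hab : 0 < a + b) (ht : 0 < t) {ζ : K}
    (hζ : IsPrimitiveRoot ζ t) {z : K} (hz : z ≠ 0) :
    (∏ k ∈ Finset.range t, thetaSeries a b (-(ζ ^ k * z))) * qPoch (t * (a + b)) (t * (a + b)) 1 =
      qPoch (a + b) (a + b) 1 ^ t * thetaSeries (t * a) (t * b) (-z ^ t) := by
  have hζ0 := hζ.ne_zero ht.ne'
  have hfactor : ∀ k, thetaSeries a b (-(ζ ^ k * z)) = qPoch (a + b) (a + b) 1 *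
      qPoch a (a + b) (ζ ^ k * z) * qPoch b (a + b) (ζ⁻¹ ^ k * z⁻¹) := fun k ↦ by
    rw [thetaSeries_neg_eq_qPoch hab (mul_ne_zero (pow_ne_zero k hζ0) hz), mul_inv, inv_pow]
  simp only [hfactor]
  rw [Finset.prod_mul_distrib, Finset.prod_mul_distrib, Finset.prod_const, Finset.card_range,
    prod_qPoch_pow_mul ht hζ hab, prod_qPoch_pow_mul ht hζ.inv hab,
    thetaSeries_neg_eq_qPoch (by rw [← mul_add]; positivity) (pow_ne_zero t hz), mul_add, inv_pow]
  ring

lemma winquistConst_eq_qPoch_sq [CharZero K] {ω : K} (hω : IsPrimitiveRoot ω 3) :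
    winquistConst K = qPoch 1 1 1 ^ 2 := by
  have hω0 : ω ≠ 0 := hω.ne_zero three_ne_zero
  have hC : (C (1 - ω) : K⟦X⟧) ≠ 0 := (map_ne_zero_iff _ C_injective).mpr
    (sub_ne_zero.mpr (hω.ne_one (by norm_num)).symm)
  have hinv : ω⁻¹ = ω ^ 2 :=
    inv_eq_of_mul_eq_one_right (by rw [← pow_succ', hω.pow_eq_one])
  have hθ : thetaSeries 0 3 (-2 ^ 3 : K) ≠ 0 :=
    thetaSeries_zero_neg_ne_zero three_pos (by norm_num) (by norm_num)
  have hω₃ : thetaSeries 0 1 (-ω) = C (1 - ω) * qPoch 3 3 1 := by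
    have h := prod_qPoch_pow_mul (t := 3) three_pos hω one_pos 1 1
    simp only [Finset.prod_range_succ, Finset.prod_range_zero, pow_zero, pow_one, one_mul, mul_one,
      one_pow] at h
    rw [thetaSeries_zero_neg one_pos hω0, hinv, h]
  have hprod := prod_thetaSeries_pow_mul (a := 0) (b := 1) (t := 3) one_pos three_pos hω
    (two_ne_zero' K)
  have hW := four_thetaSeries_eq_winquistConst_mul (two_ne_zero' K) hω0
  rw [hω.pow_eq_one, thetaSeries_zero_neg_one three_pos,
    quintuple_of_pow_three_eq_one hω.pow_eq_one, hω₃, div_eq_mul_inv, hinv] at hW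
  simp only [Finset.prod_range_succ, Finset.prod_range_zero, pow_zero, pow_one, one_mul, mul_one,
    mul_zero, zero_add, mul_comm _ (2 : K)] at hprod
  refine mul_right_cancel₀ (mul_ne_zero (mul_ne_zero hC (qPoch_ne_zero one_pos one_pos 1)) hθ) ?_
  linear_combination C (1 - ω) * hprod - hW

/-- Winquist's identity. -/
theorem four_thetaSeries_eq_qPoch_sq_mul [CharZero K] {ω a b : K} (hω : IsPrimitiveRoot ω 3)
    (ha : a ≠ 0) (hb : b ≠ 0) :
    thetaSeries 0 1 (-a) * thetaSeries 0 1 (-b) * thetaSeries 0 1 (-(a * b)) *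
        thetaSeries 0 1 (-(a / b)) =
      qPoch 1 1 1 ^ 2 * (thetaSeries 0 3 (-a ^ 3) * quintuple b -
        C (a / b) * (quintuple a * thetaSeries 0 3 (-b ^ 3))) := by
  rw [four_thetaSeries_eq_winquistConst_mul ha hb, winquistConst_eq_qPoch_sq hω]

end RootsOfUnity

section Vanishing

lemma coeff_mul_expand_eq_zero {R : Type*} [CommRing R] {t m : ℕ} (ht : t ≠ 0) {F : R⟦X⟧}
    (hF : ∀ i : ℕ, (i : ZMod t) = m → coeff i F = 0) (G : R⟦X⟧) :
    coeff m (F * expand t ht G) = 0 := by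
  rw [coeff_mul]
  refine Finset.sum_eq_zero fun x hx ↦ ?_
  rw [coeff_expand]
  split_ifs with hdvd
  · rw [hF, zero_mul]
    rw [← Finset.HasAntidiagonal.mem_antidiagonal.mp hx, Nat.cast_add,
      (ZMod.natCast_eq_zero_iff _ _).mpr hdvd, add_zero]
  · rw [mul_zero]

variable {K : Type*} [Field K] [CharZero K] [TopologicalSpace K] [IsTopologicalRing K] [T2Space K]

lemma coeff_thetaSeries_mul_thetaSeries_eq_zero {a b d t m : ℕ} [NeZero t] (hd : 0 < d)
    (hab : 0 < a + b) {z : K} (hz : z ^ t = 1) (w : K)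
    (h : ∀ x y : ZMod t, d * (x * (x - 1)) + (a * (y * (y + 1)) + b * (y * (y - 1))) = 2 * m →
      2 * x = 1) :
    coeff m (thetaSeries 0 d (-z) * thetaSeries a b w) = 0 := by
  have hz0 : z ≠ 0 := by
    rintro rfl
    simp [NeZero.ne t] at hz
  have htend := tendsto_thetaExp (a := 0) (b := d) (by omega)
  have hsymm : ∀ k, thetaExp 0 d (1 - k) = thetaExp 0 d k := fun k ↦ by
    have hk := two_mul_thetaExp 0 d k
    have hk' := two_mul_thetaExp 0 d (1 - k)
    push_cast at hk hk'
    zify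
    linarith
  rw [thetaSeries, thetaSeries, qSeries_mul_qSeries htend (tendsto_thetaExp hab),
    coeff_qSeries (tendsto_add_cofinite_atTop htend (tendsto_thetaExp hab)),
    ← self_eq_neg, ← tsum_neg, ← ((Equiv.subLeft (1 : ℤ)).prodCongr (Equiv.refl ℤ)).tsum_eq]
  refine tsum_congr fun ⟨k, l⟩ ↦ ?_
  simp only [Equiv.prodCongr_apply, Prod.map, Equiv.subLeft_apply, Equiv.refl_apply, hsymm]
  split_ifs with hm
  · obtain ⟨s, hs⟩ : (t : ℤ) ∣ 2 * k - 1 := by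
      have hexp := congrArg (Int.cast : ℤ → ZMod t)
        (congrArg₂ (· + ·) (two_mul_thetaExp 0 d k) (two_mul_thetaExp a b l))
      rw [← mul_add, ← Nat.cast_add, ← hm] at hexp
      push_cast at hexp
      rw [← ZMod.intCast_zmod_eq_zero_iff_dvd]
      push_cast
      rw [h k l (by rw [hexp, zero_mul, zero_add]), sub_self]
    have hsign : (-z) ^ (2 * k - 1) = -1 := by
      rw [Odd.neg_zpow ⟨k - 1, by ring⟩, hs, zpow_mul, zpow_natCast, hz, one_zpow]
    have hk : (-z) ^ k = -(-z) ^ (1 - k) := by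
      rw [← neg_one_mul (_ ^ _), ← hsign, ← zpow_add₀ (neg_ne_zero.mpr hz0)]
      ring_nf
    rw [hk, neg_mul, neg_neg]
  · simp

end Vanishing

section CrankGeneratingFunction

/-- The generating function of all partitions, with `z` marking the number of parts. -/
noncomputable def partGF {R : Type*} [CommSemiring R] (z : R) : R⟦X⟧ :=
  Nat.Partition.genFun fun _ c ↦ z ^ c

lemma qPoch_mul_partGF {R : Type*} [CommRing R] [TopologicalSpace R] [IsTopologicalRing R]
    [T2Space R] (z : R) : qPoch 1 1 z * partGF z = 1 := by
  rw [partGF, Nat.Partition.genFun_eq_tprod, qPoch, ← (multipliable_qPoch one_pos 1 z).tprod_mul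
    (Nat.Partition.multipliable_genFun fun _ c ↦ z ^ c)]
  convert tprod_one with n
  have h0 : constantCoeff (C z * X ^ (1 + n) : R⟦X⟧) = 0 := by simp
  have hgeom := WithPiTopology.tsum_pow_mul_one_sub_of_constantCoeff_eq_zero h0
  rw [(WithPiTopology.summable_pow_of_constantCoeff_eq_zero h0).tsum_eq_zero_add, pow_zero,
    mul_comm] at hgeom
  rw [one_mul, ← hgeom]
  congr! 4 with j
  rw [mul_pow, ← pow_mul, ← map_pow, smul_eq_C_mul, add_comm 1 n]

lemma inv_pow_eq_pow {K : Type*} [Field K] {ζ : K} {t k l : ℕ} (hζ : ζ ^ t = 1)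
    (h : k + l = t) : (ζ ^ k)⁻¹ = ζ ^ l :=
  inv_eq_of_mul_eq_one_right (by rw [← pow_add, h, hζ])

lemma one_sub_pow_ne_zero {R : Type*} [CommRing R] {ζ : R} {t k : ℕ} (hζ : IsPrimitiveRoot ζ t)
    (hk : k ≠ 0) (hkt : k < t) : 1 - ζ ^ k ≠ 0 :=
  sub_ne_zero.mpr (hζ.pow_ne_one_of_pos_of_lt hk hkt).symm

variable {K : Type*} [Field K] [TopologicalSpace K]

/-- The generating function of vector partitions counted with their weight, `z` marking the
crank. -/
noncomputable def crankGF (z : K) : K⟦X⟧ := qPoch 1 1 1 * (partGF z * partGF z⁻¹)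

variable [IsTopologicalRing K] [T2Space K]

lemma thetaSeries_neg_pow {ζ : K} {t k l : ℕ} (hζ : IsPrimitiveRoot ζ t) (ht : t ≠ 0)
    (h : k + l = t) : thetaSeries 0 1 (-ζ ^ k) =
      C (1 - ζ ^ k) * (qPoch 1 1 1 * qPoch 1 1 (ζ ^ k) * qPoch 1 1 (ζ ^ l)) := by
  rw [thetaSeries_zero_neg one_pos (pow_ne_zero k (hζ.ne_zero ht)),
    inv_pow_eq_pow hζ.pow_eq_one h]

lemma crankGF_eq_mul_expand {m : ℕ} {ζ : K} (hζ : IsPrimitiveRoot ζ (m + 3)) :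
    crankGF ζ = qPoch 1 1 1 ^ 2 * (∏ k ∈ Finset.range m, qPoch 1 1 (ζ ^ (k + 2))) *
      expand (m + 3) (by omega) (partGF 1) := by
  have hprod := prod_qPoch_pow_mul (by omega) hζ one_pos 1 1
  have hone := congrArg (expand (m + 3) (by omega)) (qPoch_mul_partGF (1 : K))
  have hζ₁ := qPoch_mul_partGF ζ
  have hζ₂ := qPoch_mul_partGF ζ⁻¹
  have hinv : ζ⁻¹ = ζ ^ (m + 2) := inv_eq_of_mul_eq_one_right (by rw [← pow_succ', hζ.pow_eq_one])
  rw [map_mul, map_one, expand_qPoch _ one_pos] at hone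
  rw [Finset.prod_range_succ, Finset.prod_range_succ', Finset.prod_range_succ', one_pow] at hprod
  simp only [zero_add, pow_one, pow_zero, add_assoc, Nat.reduceAdd, mul_one, ← hinv] at hprod
  rw [mul_one, ← hprod] at hone
  rw [crankGF]
  generalize ∏ k ∈ Finset.range m, qPoch 1 1 (ζ ^ (k + 2)) = Q at *
  generalize expand (m + 3) _ (partGF (1 : K)) = H at *
  linear_combination qPoch 1 1 1 ^ 2 * Q * H * (hζ₁ + qPoch 1 1 ζ * partGF ζ * hζ₂) -
    qPoch 1 1 1 * partGF ζ * partGF ζ⁻¹ * hone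

lemma coeff_crankGF_eq_zero {m n : ℕ} {ζ s : K} (hζ : IsPrimitiveRoot ζ (m + 3)) (hs : s ≠ 0)
    {F : K⟦X⟧}
    (hF : C s * (qPoch 1 1 1 ^ 2 * ∏ k ∈ Finset.range m, qPoch 1 1 (ζ ^ (k + 2))) = F)
    (hcoeff : ∀ i : ℕ, (i : ZMod (m + 3)) = n → coeff i F = 0) : coeff n (crankGF ζ) = 0 := by
  rw [crankGF_eq_mul_expand hζ]
  refine coeff_mul_expand_eq_zero _ (fun i hi ↦ ?_) _
  have h := hcoeff i (by exact_mod_cast hi)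
  rw [← hF, coeff_C_mul] at h
  exact (mul_eq_zero.mp h).resolve_left hs

lemma four_thetaSeries_pow_eq_prod_qPoch {ζ : K} (hζ : IsPrimitiveRoot ζ 11) :
    thetaSeries 0 1 (-ζ ^ 2) * thetaSeries 0 1 (-ζ ^ 5) * thetaSeries 0 1 (-ζ ^ 7) *
        thetaSeries 0 1 (-ζ ^ 8) =
      C ((1 - ζ ^ 2) * (1 - ζ ^ 5) * ((1 - ζ ^ 7) * (1 - ζ ^ 8))) *
        (qPoch 1 1 1 ^ 4 * ∏ k ∈ Finset.range 8, qPoch 1 1 (ζ ^ (k + 2))) := by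
  rw [thetaSeries_neg_pow (k := 2) (l := 9) hζ (by norm_num) rfl,
    thetaSeries_neg_pow (k := 5) (l := 6) hζ (by norm_num) rfl,
    thetaSeries_neg_pow (k := 7) (l := 4) hζ (by norm_num) rfl,
    thetaSeries_neg_pow (k := 8) (l := 3) hζ (by norm_num) rfl]
  simp only [Finset.prod_range_succ, Finset.prod_range_zero, Nat.reduceAdd, map_mul]
  ring

variable [CharZero K]

lemma coeff_crankGF_five {ζ : K} (hζ : IsPrimitiveRoot ζ 5) {n : ℕ} (hn : (n : ZMod 5) = 4) :
    coeff n (crankGF ζ) = 0 := by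
  refine coeff_crankGF_eq_zero (m := 2) (s := 1 - ζ ^ 2)
    (F := thetaSeries 0 1 (-ζ ^ 2) * thetaSeries 1 2 (-1)) hζ
    (one_sub_pow_ne_zero hζ (by norm_num) (by norm_num)) ?_ fun i hi ↦ ?_
  · rw [thetaSeries_neg_pow (l := 3) hζ (by norm_num) rfl, thetaSeries_one_two_neg_one]
    simp only [Finset.prod_range_succ, Finset.prod_range_zero, Nat.reduceAdd]
    ring
  · refine coeff_thetaSeries_mul_thetaSeries_eq_zero (t := 5) one_pos (by norm_num)
      (by rw [pow_right_comm, hζ.pow_eq_one, one_pow]) _ ?_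
    rw [hi, hn]
    decide

lemma coeff_crankGF_seven {ζ : K} (hζ : IsPrimitiveRoot ζ 7) {n : ℕ} (hn : (n : ZMod 7) = 5) :
    coeff n (crankGF ζ) = 0 := by
  refine coeff_crankGF_eq_zero (m := 4) (s := (1 - ζ ^ 2) * (1 - ζ ^ 3))
    (F := thetaSeries 0 1 (-ζ ^ 2) * thetaSeries 0 1 (-ζ ^ 3)) hζ
    (mul_ne_zero (one_sub_pow_ne_zero hζ (by norm_num) (by norm_num))
      (one_sub_pow_ne_zero hζ (by norm_num) (by norm_num))) ?_ fun i hi ↦ ?_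
  · rw [thetaSeries_neg_pow (l := 5) hζ (by norm_num) rfl,
      thetaSeries_neg_pow (l := 4) hζ (by norm_num) rfl, map_mul]
    simp only [Finset.prod_range_succ, Finset.prod_range_zero, Nat.reduceAdd]
    ring
  · refine coeff_thetaSeries_mul_thetaSeries_eq_zero (t := 7) one_pos (by norm_num)
      (by rw [pow_right_comm, hζ.pow_eq_one, one_pow]) _ ?_
    rw [hi, hn]
    decide

lemma coeff_thetaSeries_mul_quintuple_eq_zero {z : K} (hz : z ^ 11 = 1) (b : K) {n : ℕ}
    (hn : (n : ZMod 11) = 6) : coeff n (thetaSeries 0 3 (-z) * quintuple b) = 0 := by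
  have h₁₂ := coeff_thetaSeries_mul_thetaSeries_eq_zero (a := 1) (b := 2) (d := 3) (m := n)
    three_pos (by norm_num) hz (-b ^ 3) (by rw [hn]; decide)
  have h₂₁ := coeff_thetaSeries_mul_thetaSeries_eq_zero (a := 2) (b := 1) (d := 3) (m := n)
    three_pos (by norm_num) hz (-b ^ 3) (by rw [hn]; decide)
  rw [quintuple, mul_sub, map_sub, h₁₂, mul_left_comm, coeff_C_mul, h₂₁, mul_zero, sub_zero]

lemma coeff_crankGF_eleven {ω ζ : K} (hω : IsPrimitiveRoot ω 3) (hζ : IsPrimitiveRoot ζ 11)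
    {n : ℕ} (hn : (n : ZMod 11) = 6) : coeff n (crankGF ζ) = 0 := by
  have h0 : ζ ≠ 0 := hζ.ne_zero (by norm_num)
  have hdiv : ζ ^ 2 / ζ ^ 5 = ζ ^ 8 := by
    rw [div_eq_mul_inv, inv_pow_eq_pow (l := 6) hζ.pow_eq_one rfl, ← pow_add]
  have hpow (k : ℕ) : ((ζ ^ k) ^ 3) ^ 11 = 1 := by
    rw [pow_right_comm, pow_right_comm ζ, hζ.pow_eq_one, one_pow, one_pow]
  refine coeff_crankGF_eq_zero (m := 8)
    (s := (1 - ζ ^ 2) * (1 - ζ ^ 5) * ((1 - ζ ^ 7) * (1 - ζ ^ 8)))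
    (F := thetaSeries 0 3 (-(ζ ^ 2) ^ 3) * quintuple (ζ ^ 5) -
      C (ζ ^ 8) * (quintuple (ζ ^ 2) * thetaSeries 0 3 (-(ζ ^ 5) ^ 3))) hζ ?_ ?_ fun i hi ↦ ?_
  · refine mul_ne_zero (mul_ne_zero ?_ ?_) (mul_ne_zero ?_ ?_) <;>
    exact one_sub_pow_ne_zero hζ (by norm_num) (by norm_num)
  · have hW := four_thetaSeries_eq_qPoch_sq_mul hω (pow_ne_zero 2 h0) (pow_ne_zero 5 h0)
    rw [hdiv, ← pow_add, four_thetaSeries_pow_eq_prod_qPoch hζ] at hW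
    refine mul_left_cancel₀ (pow_ne_zero 2 (qPoch_ne_zero one_pos one_pos 1)) ?_
    rw [← hW]
    ring
  · rw [map_sub, coeff_C_mul, mul_comm (quintuple _),
      coeff_thetaSeries_mul_quintuple_eq_zero (hpow 2) _ (hi.trans hn),
      coeff_thetaSeries_mul_quintuple_eq_zero (hpow 5) _ (hi.trans hn), mul_zero, sub_zero]

end CrankGeneratingFunction

section VectorPartitions

/-- Multisets of positive integers: the partitions of all natural numbers together, so that a
generating function over partitions is a single `qSeries`. -/
abbrev PosMultiset := {s : Multiset ℕ // ∀ i ∈ s, 0 < i}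

/-- The size of a partition. -/
def PosMultiset.size (s : PosMultiset) : ℕ := s.1.sum

/-- A partition of `n` seen as an element of `PosMultiset`. -/
def PosMultiset.ofPartition {n : ℕ} (p : n.Partition) : PosMultiset :=
  ⟨p.parts, fun _ ↦ p.parts_pos⟩

lemma PosMultiset.ofPartition_injective (n : ℕ) :
    Function.Injective (ofPartition (n := n)) :=
  fun _ _ h ↦ Nat.Partition.ext (congrArg Subtype.val h)

lemma PosMultiset.mem_range_ofPartition {n : ℕ} {s : PosMultiset} (hs : n = s.size) :
    s ∈ Set.range (ofPartition (n := n)) :=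
  ⟨⟨s.1, fun {i} ↦ s.2 i, hs.symm⟩, rfl⟩

lemma PosMultiset.tendsto_size : Tendsto size cofinite atTop := by
  refine tendsto_atTop.mpr fun n ↦ eventually_cofinite.mpr ?_
  refine ((Set.finite_Iio n).biUnion fun m _ ↦
    Set.finite_range (ofPartition (n := m))).subset fun s hs ↦ ?_
  exact Set.mem_biUnion (not_le.mp hs) (mem_range_ofPartition rfl)

section GenFun

variable {R : Type*} [TopologicalSpace R] [T2Space R]

lemma genFun_eq_qSeries [CommSemiring R] (f : ℕ → ℕ → R) :
    Nat.Partition.genFun f = qSeries PosMultiset.size fun s ↦ s.1.toFinsupp.prod f := by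
  ext n
  rw [coeff_qSeries PosMultiset.tendsto_size, Nat.Partition.coeff_genFun,
    ← (PosMultiset.ofPartition_injective n).tsum_eq, tsum_fintype]
  · exact Finset.sum_congr rfl fun p _ ↦ (if_pos p.parts_sum.symm).symm
  · exact fun s hs ↦ PosMultiset.mem_range_ofPartition (by_contra fun h ↦ hs (if_neg h))

lemma partGF_eq_qSeries [CommSemiring R] (z : R) :
    partGF z = qSeries PosMultiset.size fun s ↦ z ^ s.1.card := by
  rw [partGF, genFun_eq_qSeries]
  congr! 2 with s
  rw [Finsupp.prod, Finset.prod_pow_eq_pow_sum]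
  simp

lemma toFinsupp_prod_ite {S : Type*} [CommRing S] (s : Multiset ℕ) :
    s.toFinsupp.prod (fun _ c ↦ if c = 1 then (-1 : S) else 0) =
      if s.Nodup then (-1) ^ s.card else 0 := by
  have hnodup : (∀ i ∈ s.toFinset, s.count i = 1) ↔ s.Nodup := by
    simp only [Multiset.mem_toFinset, Multiset.nodup_iff_count_eq_one]
  rw [Finsupp.prod, Finset.prod_ite_zero, Finset.prod_const]
  simp only [Multiset.toFinsupp_support, Multiset.toFinsupp_apply, hnodup]
  split_ifs with h
  · rw [Multiset.toFinset_card_of_nodup h]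
  · rfl

lemma qPoch_one_one_one_eq_qSeries [CommRing R] [IsTopologicalRing R] : qPoch 1 1 (1 : R) =
    qSeries PosMultiset.size fun s ↦ if s.1.Nodup then (-1) ^ s.1.card else 0 := by
  simp_rw [← toFinsupp_prod_ite]
  rw [← genFun_eq_qSeries, Nat.Partition.genFun_eq_tprod, qPoch]
  congr! 2 with n
  rw [tsum_eq_single 0]
  · simp [sub_eq_add_neg, add_comm]
  · intro j hj
    simp [hj]

end GenFun

/-- The three multisets underlying a triple of partitions. -/
def PosMultiset.triple (x : PosMultiset × PosMultiset × PosMultiset) :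
    Multiset ℕ × Multiset ℕ × Multiset ℕ := (x.1.1, x.2.1.1, x.2.2.1)

lemma PosMultiset.triple_injective : Function.Injective triple := by
  rintro ⟨a, b, c⟩ ⟨a', b', c'⟩ h
  simpa [triple, Subtype.ext_iff] using h

lemma PosMultiset.mem_range_triple {x : Multiset ℕ × Multiset ℕ × Multiset ℕ}
    (hx : IsVectorPartition x) : x ∈ Set.range triple :=
  ⟨(⟨x.1, hx.2.1⟩, ⟨x.2.1, hx.2.2.1⟩, ⟨x.2.2, hx.2.2.2⟩), rfl⟩

lemma tendsto_size_add_size_add_size :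
    Tendsto (fun x : PosMultiset × PosMultiset × PosMultiset ↦
      x.1.size + (x.2.1.size + x.2.2.size)) cofinite atTop :=
  tendsto_add_cofinite_atTop (f := fun x : PosMultiset × PosMultiset ↦ x.1.size + x.2.size)
    PosMultiset.tendsto_size
    (tendsto_add_cofinite_atTop PosMultiset.tendsto_size PosMultiset.tendsto_size)

lemma finite_setOf_isVectorPartition (n : ℕ) : {x : Multiset ℕ × Multiset ℕ × Multiset ℕ |
    IsVectorPartition x ∧ x.1.sum + x.2.1.sum + x.2.2.sum = n}.Finite := by
  have hfin := eventually_cofinite.mp (tendsto_size_add_size_add_size.eventually_gt_atTop n)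
  refine (hfin.image PosMultiset.triple).subset fun x ⟨hx, hsum⟩ ↦ ?_
  obtain ⟨y, rfl⟩ := PosMultiset.mem_range_triple hx
  rw [add_assoc] at hsum
  exact ⟨y, not_lt.mpr hsum.le, rfl⟩

/-- The vector partitions of `n`. -/
noncomputable def vectorPartitions (n : ℕ) : Finset (Multiset ℕ × Multiset ℕ × Multiset ℕ) :=
  (finite_setOf_isVectorPartition n).toFinset

lemma mem_vectorPartitions {n : ℕ} {x : Multiset ℕ × Multiset ℕ × Multiset ℕ} :
    x ∈ vectorPartitions n ↔ IsVectorPartition x ∧ x.1.sum + x.2.1.sum + x.2.2.sum = n := by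
  simp [vectorPartitions]

lemma triple_mem_vectorPartitions {n : ℕ} {x : PosMultiset × PosMultiset × PosMultiset} :
    PosMultiset.triple x ∈ vectorPartitions n ↔
      x.1.1.Nodup ∧ n = x.1.size + (x.2.1.size + x.2.2.size) := by
  rw [mem_vectorPartitions, eq_comm, ← add_assoc]
  exact and_congr_left' ⟨And.left, fun h ↦ ⟨h, x.1.2, x.2.1.2, x.2.2.2⟩⟩

open Classical in
lemma NV_eq_sum (k t : ℤ) (n : ℕ) :
    NV k t n = ∑ x ∈ vectorPartitions n with vcrank x ≡ k [ZMOD t], (-1) ^ x.1.card := by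
  have hcard (Q : Multiset ℕ × Multiset ℕ × Multiset ℕ → Prop) :
      Nat.card {x // IsVectorPartition x ∧ x.1.sum + x.2.1.sum + x.2.2.sum = n ∧
        vcrank x ≡ k [ZMOD t] ∧ Q x} =
      (((vectorPartitions n).filter fun x ↦ vcrank x ≡ k [ZMOD t]).filter Q).card :=
    Nat.subtype_card _ fun x ↦ by simp only [Finset.mem_filter, mem_vectorPartitions, and_assoc]
  rw [NV, hcard, hcard, Finset.natCast_card_filter, Finset.natCast_card_filter,
    ← Finset.sum_sub_distrib]
  refine Finset.sum_congr rfl fun x _ ↦ ?_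
  rcases Nat.even_or_odd x.1.card with h | h
  · simp [h, h.neg_one_pow]
  · simp [Nat.not_even_iff_odd.mpr h, h.neg_one_pow]

variable {K : Type*} [Field K] [TopologicalSpace K] [IsTopologicalRing K] [T2Space K]

lemma coeff_crankGF {z : K} (hz : z ≠ 0) (n : ℕ) :
    coeff n (crankGF z) = ∑ x ∈ vectorPartitions n, (-1) ^ x.1.card * z ^ vcrank x := by
  classical
  have hsize := PosMultiset.tendsto_size
  set g : Multiset ℕ × Multiset ℕ × Multiset ℕ → K := fun x ↦
    if x ∈ vectorPartitions n then (-1) ^ x.1.card * z ^ vcrank x else 0 with hg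
  have hg_support : Function.support g ⊆ Set.range PosMultiset.triple := fun x hx ↦
    PosMultiset.mem_range_triple (mem_vectorPartitions.mp (by_contra fun h ↦ hx (if_neg h))).1
  rw [crankGF, qPoch_one_one_one_eq_qSeries, partGF_eq_qSeries, partGF_eq_qSeries,
    qSeries_mul_qSeries hsize hsize,
    qSeries_mul_qSeries hsize (tendsto_add_cofinite_atTop hsize hsize),
    coeff_qSeries tendsto_size_add_size_add_size]
  calc _ = ∑' x, g (PosMultiset.triple x) := tsum_congr fun x ↦ by
        simp only [hg, triple_mem_vectorPartitions, ite_and]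
        split_ifs with hn hnodup
        · rw [vcrank, PosMultiset.triple, zpow_sub₀ hz, zpow_natCast, zpow_natCast, inv_pow,
            div_eq_mul_inv]
        all_goals simp
    _ = ∑' x, g x := PosMultiset.triple_injective.tsum_eq hg_support
    _ = ∑ x ∈ vectorPartitions n, g x := tsum_eq_sum fun x hx ↦ if_neg hx
    _ = _ := Finset.sum_congr rfl fun x hx ↦ if_pos hx

lemma sum_pow_zpow {F : Type*} [Field F] {t : ℕ} {ζ : F} (hζ : IsPrimitiveRoot ζ t) (c k : ℤ) :
    ∑ j ∈ Finset.range t, (ζ ^ j) ^ (c - k) = if c ≡ k [ZMOD t] then (t : F) else 0 := by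
  have h : c ≡ k [ZMOD t] ↔ ζ ^ (c - k) = 1 := by
    rw [hζ.zpow_eq_one_iff_dvd, Int.modEq_comm, Int.modEq_iff_dvd]
  have hcomm : ∀ j : ℕ, (ζ ^ j) ^ (c - k) = (ζ ^ (c - k)) ^ j := fun j ↦ by
    rw [← zpow_natCast, zpow_comm, zpow_natCast]
  simp only [hcomm]
  split_ifs with hc
  · simp [h.mp hc]
  · rw [geom_sum_eq (mt h.mpr hc), ← hcomm, hζ.pow_eq_one, one_zpow, sub_self, zero_div]

lemma NV_mul_eq_sum_coeff_crankGF {t : ℕ} (ht : t ≠ 0) {ζ : K} (hζ : IsPrimitiveRoot ζ t) (k : ℤ)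
    (n : ℕ) : (NV k t n : K) * t =
      ∑ j ∈ Finset.range t, (ζ ^ j) ^ (-k) * coeff n (crankGF (ζ ^ j)) := by
  classical
  have hζ0 := hζ.ne_zero ht
  simp only [coeff_crankGF (pow_ne_zero _ hζ0), Finset.mul_sum]
  rw [Finset.sum_comm, NV_eq_sum, Finset.sum_filter, Int.cast_sum, Finset.sum_mul]
  refine Finset.sum_congr rfl fun x _ ↦ ?_
  calc ((if vcrank x ≡ k [ZMOD t] then (-1) ^ x.1.card else 0 : ℤ) : K) * t
      = (-1) ^ x.1.card * ∑ j ∈ Finset.range t, (ζ ^ j) ^ (vcrank x - k) := by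
        rw [sum_pow_zpow hζ]
        split_ifs <;> simp
    _ = _ := by
        rw [Finset.mul_sum]
        refine Finset.sum_congr rfl fun j _ ↦ ?_
        rw [mul_left_comm, ← zpow_add₀ (pow_ne_zero _ hζ0), neg_add_eq_sub]

lemma coeff_crankGF_one (n : ℕ) : coeff n (crankGF (1 : K)) = Nat.card n.Partition := by
  rw [crankGF, inv_one, ← mul_assoc, qPoch_mul_partGF, one_mul, partGF,
    Nat.Partition.coeff_genFun]
  simp [Finsupp.prod]

lemma NV_eq_of_coeff_crankGF_eq_zero {t n : ℕ} (ht : t.Prime)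
    (h : ∀ ζ : ℂ, IsPrimitiveRoot ζ t → coeff n (crankGF ζ) = 0) (k : ℤ) :
    (NV k t n : ℚ) = (Nat.card n.Partition : ℚ) / t := by
  have hζ := Complex.isPrimitiveRoot_exp t ht.ne_zero
  rw [eq_div_iff (Nat.cast_ne_zero.mpr ht.ne_zero)]
  suffices (NV k t n : ℂ) * t = Nat.card n.Partition by exact_mod_cast this
  rw [NV_mul_eq_sum_coeff_crankGF ht.ne_zero hζ,
    Finset.sum_eq_single_of_mem 0 (Finset.mem_range.mpr ht.pos) fun j hj hj0 ↦ ?_,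
    pow_zero, one_zpow, one_mul, coeff_crankGF_one]
  have hcop : j.Coprime t := (Nat.coprime_of_lt_prime hj0 (Finset.mem_range.mp hj) ht).symm
  rw [h _ (hζ.pow_of_coprime j hcop), mul_zero]

end VectorPartitions

/-- Garvan's theorem: the vector crank witnesses all three Ramanujan congruences:
`N_V(k,5,5n+4) = p(5n+4)/5`, `N_V(k,7,7n+5) = p(7n+5)/7`, and
`N_V(k,11,11n+6) = p(11n+6)/11`. -/
theorem garvan_vector_crank (n : ℕ) :
    (∀ k : ℤ, 0 ≤ k → k ≤ 4 →
      (NV k 5 (5 * n + 4) : ℚ) = (Nat.card (Nat.Partition (5 * n + 4)) : ℚ) / 5) ∧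
    (∀ k : ℤ, 0 ≤ k → k ≤ 6 →
      (NV k 7 (7 * n + 5) : ℚ) = (Nat.card (Nat.Partition (7 * n + 5)) : ℚ) / 7) ∧
    (∀ k : ℤ, 0 ≤ k → k ≤ 10 →
      (NV k 11 (11 * n + 6) : ℚ) = (Nat.card (Nat.Partition (11 * n + 6)) : ℚ) / 11) := by
  have hn (t r : ℕ) : ((t * n + r : ℕ) : ZMod t) = r := by simp
  have hω : IsPrimitiveRoot _ 3 := Complex.isPrimitiveRoot_exp 3 (by norm_num)
  exact ⟨fun k _ _ ↦ NV_eq_of_coeff_crankGF_eq_zero (t := 5) (by norm_num)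
      (fun _ hζ ↦ coeff_crankGF_five hζ (hn 5 4)) k,
    fun k _ _ ↦ NV_eq_of_coeff_crankGF_eq_zero (t := 7) (by norm_num)
      (fun _ hζ ↦ coeff_crankGF_seven hζ (hn 7 5)) k,
    fun k _ _ ↦ NV_eq_of_coeff_crankGF_eq_zero (t := 11) (by norm_num)
      (fun _ hζ ↦ coeff_crankGF_eleven hω hζ (hn 11 6)) k⟩
end

section
/- For every nonnegative integer n: M(k,5,5n+4) = p(5n+4)/5 for 0 ≤ k ≤ 4; M(k,7,7n+5) = p(7n+5)/7 for 0 ≤ k ≤ 6; and M(k,11,11n+6) = p(11n+6)/11 for 0 ≤ k ≤ 10. -/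
/-- The Andrews–Garvan crank of a partition: with `λ(π)` the largest part, `μ(π)` the
number of ones, and `ν(π)` the number of parts larger than `μ(π)`, the crank is `λ(π)`
if `μ(π) = 0` and `ν(π) − μ(π)` otherwise. -/
def Nat.Partition.crank {n : ℕ} (π : Nat.Partition n) : ℤ :=
  if π.parts.count 1 = 0 then (π.parts.sup : ℤ)
  else ((Multiset.card (π.parts.filter fun i => π.parts.count 1 < i)) : ℤ) -
    (π.parts.count 1 : ℤ)

/-!
The crank generating function is `(q; q)_∞ / ((zq; q)_∞ (q/z; q)_∞)` in degrees at least two: split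
the partitions by their number of ones and sum with the `q`-binomial theorem. By orthogonality of
characters, equidistribution of the crank mod `t` means that at each primitive `t`-th root of unity
`ζ` the coefficients in the given residue class vanish. The product of `(ζʲq; q)_∞` over all `j` mod
`t` is a series in `qᵗ`, so multiplying by it does not affect this vanishing. It cancels the
denominator and leaves a product that is a double series: by Euler and Jacobi for `t = 5`, by Jacobi
twice for `t = 7`, and by Winquist for `t = 11`. In the given residue class, the quadratic form in
the exponent mod `t` admits only pairs of indices at which an involution reverses the sign of the
term.
-/

namespace AndrewsGarvan

open Finset Filter PowerSeries Topology
open scoped PowerSeries.WithPiTopology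

section Summation

theorem hasSum_sum_filter_eq {α ι M : Type*} [DecidableEq ι] [AddCommMonoid M]
    [TopologicalSpace M] (s : Finset α) (g : α → ι) (f : α → M) :
    HasSum (fun i ↦ ∑ a ∈ s with g a = i, f a) (∑ a ∈ s, f a) := by
  rw [← sum_fiberwise_of_maps_to (t := s.image g) fun a ha ↦ mem_image_of_mem g ha]
  refine hasSum_sum_of_ne_finset_zero fun i hi ↦ sum_eq_zero fun a ha ↦ ?_
  obtain ⟨has, rfl⟩ := mem_filter.1 ha
  exact absurd (mem_image_of_mem g has) hi

theorem eq_zero_of_hasSum_of_equiv {ι M : Type*} [AddCommGroup M] [IsAddTorsionFree M]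
    [TopologicalSpace M] [IsTopologicalAddGroup M] [T2Space M] {f : ι → M} {a : M}
    (hf : HasSum f a) (σ : ι ≃ ι) (hσ : ∀ i, f (σ i) = -f i) : a = 0 := by
  have hneg : HasSum (fun i ↦ f (σ i)) (-a) := by simpa only [hσ] using hf.neg
  exact self_eq_neg.1 (hf.unique (σ.hasSum_iff.1 hneg))

variable {R : Type*} [CommRing R] [TopologicalSpace R]

theorem tendsto_of_X_pow_dvd_sub {f : ℕ → R⟦X⟧} {a : R⟦X⟧} (h : ∀ n, X ^ n ∣ f n - a) :
    Tendsto f atTop (𝓝 a) := by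
  rw [WithPiTopology.tendsto_iff_coeff_tendsto]
  refine fun d ↦ tendsto_nhds_of_eventually_eq ?_
  filter_upwards [eventually_gt_atTop d] with n hn
  exact sub_eq_zero.1 (by simpa using X_pow_dvd_iff.1 (h n) d hn)

theorem summable_of_X_pow_dvd {ι : Type*} {f : ι → R⟦X⟧} {d : ι → ℕ}
    (hd : Tendsto d cofinite atTop) (h : ∀ i, X ^ d i ∣ f i) : Summable f := by
  rw [WithPiTopology.summable_iff_summable_coeff]
  refine fun n ↦ summable_of_hasFiniteSupport ?_
  have hfin : {i | ¬ n < d i}.Finite := hd.eventually (eventually_gt_atTop n)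
  exact hfin.subset fun i hi hlt ↦ hi (X_pow_dvd_iff.1 (h i) n hlt)

theorem X_pow_dvd_of_hasSum [T2Space R] {ι : Type*} {f : ι → R⟦X⟧} {a : R⟦X⟧} {n : ℕ}
    (hf : HasSum f a) (h : ∀ i, X ^ n ∣ f i) : X ^ n ∣ a := by
  refine X_pow_dvd_iff.2 fun d hd ↦ ?_
  have hcoeff := (WithPiTopology.hasSum_iff_hasSum_coeff R).1 hf d
  simp only [fun i ↦ X_pow_dvd_iff.1 (h i) d hd] at hcoeff
  exact hcoeff.unique hasSum_zero

theorem finite_support_coeff [DiscreteTopology R] {ι : Type*} {f : ι → R⟦X⟧} (h : Summable f)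
    (d : ℕ) : (Function.support fun i ↦ coeff d (f i)).Finite :=
  ((WithPiTopology.summable_iff_summable_coeff R).1 h d).hasFiniteSupport_of_discreteTopology

theorem summable_comp_of_injective [DiscreteTopology R] {ι κ : Type*} {f : ι → R⟦X⟧}
    (hf : Summable f) {e : κ → ι} (he : e.Injective) : Summable fun k ↦ f (e k) :=
  (WithPiTopology.summable_iff_summable_coeff R).2 fun d ↦
    summable_of_hasFiniteSupport ((finite_support_coeff hf d).preimage he.injOn)

theorem hasSum_mul [DiscreteTopology R] {ι κ : Type*} {f : ι → R⟦X⟧} {g : κ → R⟦X⟧}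
    {a b : R⟦X⟧} (hf : HasSum f a) (hg : HasSum g b) :
    HasSum (fun p : ι × κ ↦ f p.1 * g p.2) (a * b) := by
  refine hf.mul hg ((WithPiTopology.summable_iff_summable_coeff R).2 fun d ↦
    summable_of_hasFiniteSupport ?_)
  refine ((HasAntidiagonal.antidiagonal d).finite_toSet.biUnion fun x _ ↦
    (finite_support_coeff hf.summable x.1).prod (finite_support_coeff hg.summable x.2)).subset
    fun p hp ↦ ?_
  rw [Function.mem_support, coeff_mul] at hp
  obtain ⟨x, hx, hne⟩ := exists_ne_zero_of_sum_ne_zero hp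
  exact Set.mem_biUnion hx ⟨left_ne_zero_of_mul hne, right_ne_zero_of_mul hne⟩

end Summation

section QPochhammer

variable {R : Type*} [CommRing R]

/-- The finite `q`-Pochhammer symbol `(a; q)ₙ = ∏_{i < n} (1 - a qⁱ)`, where the base `q` is always
the variable `X`. -/
noncomputable def qPochhammer (a : R⟦X⟧) (n : ℕ) : R⟦X⟧ := ∏ i ∈ range n, (1 - a * X ^ i)

theorem qPochhammer_zero_right (a : R⟦X⟧) : qPochhammer a 0 = 1 := prod_range_zero _

theorem qPochhammer_zero_left (n : ℕ) : qPochhammer (0 : R⟦X⟧) n = 1 := by simp [qPochhammer]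

theorem qPochhammer_succ (a : R⟦X⟧) (n : ℕ) :
    qPochhammer a (n + 1) = qPochhammer a n * (1 - a * X ^ n) :=
  prod_range_succ _ _

theorem constantCoeff_qPochhammer {a : R⟦X⟧} (ha : constantCoeff a = 0) (n : ℕ) :
    constantCoeff (qPochhammer a n) = 1 := by
  simp [qPochhammer, map_prod, ha]

theorem qPochhammer_mul_inv {K : Type*} [Field K] {a : K⟦X⟧} (ha : constantCoeff a = 0) (n : ℕ) :
    qPochhammer a n * (qPochhammer a n)⁻¹ = 1 :=
  PowerSeries.mul_inv_cancel _ (by simp [constantCoeff_qPochhammer ha])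

variable [TopologicalSpace R]

/-- The infinite `q`-Pochhammer symbol `(a; q)_∞ = ∏_{i ≥ 0} (1 - a qⁱ)` with base `q = X`. -/
noncomputable def qPochhammerInf (a : R⟦X⟧) : R⟦X⟧ := ∏' i : ℕ, (1 - a * X ^ i)

theorem hasProd_qPochhammerInf (a : R⟦X⟧) :
    HasProd (fun i ↦ 1 - a * X ^ i) (qPochhammerInf a) := by
  refine Multipliable.hasProd ?_
  simp_rw [sub_eq_add_neg]
  refine WithPiTopology.multipliable_one_add_of_tendsto_order_atTop_nhds_top R
    (ENat.tendsto_nhds_top_iff_natCast_lt.2 fun n ↦ ?_)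
  filter_upwards [eventually_gt_atTop n] with i hi
  exact (Nat.cast_lt.2 hi).trans_le <|
    nat_le_order _ _ (X_pow_dvd_iff.1 (dvd_neg.2 (dvd_mul_left _ _)))

theorem tendsto_qPochhammer (a : R⟦X⟧) :
    Tendsto (qPochhammer a) atTop (𝓝 (qPochhammerInf a)) :=
  (hasProd_qPochhammerInf a).tendsto_prod_nat

theorem qPochhammerInf_zero : qPochhammerInf (0 : R⟦X⟧) = 1 := by simp [qPochhammerInf]

variable [T2Space R]

theorem constantCoeff_qPochhammerInf {a : R⟦X⟧} (ha : constantCoeff a = 0) :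
    constantCoeff (qPochhammerInf a) = 1 := by
  refine tendsto_nhds_unique
    ((WithPiTopology.continuous_constantCoeff R).tendsto _ |>.comp (tendsto_qPochhammer a)) ?_
  simp [Function.comp_def, constantCoeff_qPochhammer ha]

theorem qPochhammerInf_mul_inv {K : Type*} [Field K] [TopologicalSpace K] [T2Space K]
    {a : K⟦X⟧} (ha : constantCoeff a = 0) : qPochhammerInf a * (qPochhammerInf a)⁻¹ = 1 :=
  PowerSeries.mul_inv_cancel _ (by simp [constantCoeff_qPochhammerInf ha])

variable [IsTopologicalRing R]

theorem qPochhammerInf_eq_mul (a : R⟦X⟧) (n : ℕ) :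
    qPochhammerInf a = qPochhammer a n * qPochhammerInf (a * X ^ n) := by
  refine (hasProd_qPochhammerInf a).unique (HasProd.prod_range_mul ?_)
  convert hasProd_qPochhammerInf (a * X ^ n) using 3 with i
  rw [pow_add]
  ring

end QPochhammer

section QBinomial

variable {K : Type*} [Field K]

/-- The `j`-th term `∏_{i < j} (u - v qⁱ) / (q; q)ⱼ` of the `q`-binomial series with base `q = X`,
in the homogeneous form that makes sense also for `u = 0`. -/
noncomputable def qBinomialTerm (u v : K⟦X⟧) (j : ℕ) : K⟦X⟧ :=
  (∏ i ∈ range j, (u - v * X ^ i)) * (qPochhammer X j)⁻¹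

theorem qBinomialTerm_zero (u v : K⟦X⟧) : qBinomialTerm u v 0 = 1 := by
  simp [qBinomialTerm, qPochhammer_zero_right]

theorem one_sub_mul_inv_qPochhammer_succ (j : ℕ) :
    (1 - X ^ (j + 1)) * (qPochhammer X (j + 1))⁻¹ = (qPochhammer (X : K⟦X⟧) j)⁻¹ := by
  have hj := qPochhammer_mul_inv (K := K) constantCoeff_X j
  have hj' := qPochhammer_mul_inv (K := K) constantCoeff_X (j + 1)
  rw [qPochhammer_succ] at hj' ⊢
  linear_combination (qPochhammer X j)⁻¹ * hj' -
    (qPochhammer X j * (1 - X * X ^ j))⁻¹ * (1 - X * X ^ j) * hj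

theorem one_sub_mul_qBinomialTerm_succ (u v : K⟦X⟧) (j : ℕ) :
    (1 - X ^ (j + 1)) * qBinomialTerm u v (j + 1) = (u - v * X ^ j) * qBinomialTerm u v j := by
  rw [qBinomialTerm, qBinomialTerm, prod_range_succ, mul_left_comm,
    one_sub_mul_inv_qPochhammer_succ]
  ring

theorem qBinomialTerm_mul_X_pow (u v : K⟦X⟧) (n j : ℕ) :
    qBinomialTerm (u * X ^ n) (v * X ^ n) j = X ^ (n * j) * qBinomialTerm u v j := by
  have hfactor (i : ℕ) : u * X ^ n - v * X ^ n * X ^ i = X ^ n * (u - v * X ^ i) := by ring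
  rw [qBinomialTerm, qBinomialTerm, prod_congr rfl fun i _ ↦ hfactor i, prod_mul_distrib,
    prod_const, card_range, pow_mul, mul_assoc]

theorem qBinomialTerm_zero_right (u : K⟦X⟧) (j : ℕ) :
    qBinomialTerm u 0 j = u ^ j * (qPochhammer X j)⁻¹ := by
  simp [qBinomialTerm]

theorem qBinomialTerm_zero_left (v : K⟦X⟧) (j : ℕ) :
    qBinomialTerm 0 v j = (-v) ^ j * X ^ j.choose 2 * (qPochhammer X j)⁻¹ := by
  simp only [qBinomialTerm, zero_sub, ← neg_mul]
  rw [prod_mul_distrib, prod_const, card_range, prod_pow_eq_pow_sum, sum_range_id,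
    Nat.choose_two_right]

theorem X_pow_dvd_qBinomialTerm {u : K⟦X⟧} (hu : constantCoeff u = 0) (v : K⟦X⟧) (j : ℕ) :
    X ^ (j - 1) ∣ qBinomialTerm u v j := by
  refine Dvd.dvd.mul_right ?_ _
  cases j with
  | zero => simp
  | succ j =>
    rw [prod_range_succ', Nat.add_sub_cancel]
    refine Dvd.dvd.mul_right ?_ _
    have hX (i : ℕ) : X ∣ u - v * X ^ (i + 1) :=
      dvd_sub (X_dvd_iff.2 hu) (dvd_mul_of_dvd_right (dvd_pow_self X i.succ_ne_zero) v)
    simpa using prod_dvd_prod_of_dvd (fun _ ↦ X) _ fun i (_ : i ∈ range j) ↦ hX i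

variable [TopologicalSpace K]

theorem summable_qBinomialTerm {u : K⟦X⟧} (hu : constantCoeff u = 0) (v : K⟦X⟧) :
    Summable (qBinomialTerm u v) := by
  refine summable_of_X_pow_dvd ?_ (X_pow_dvd_qBinomialTerm hu v)
  rw [Nat.cofinite_eq_atTop]
  exact tendsto_sub_atTop_nat 1

variable [IsTopologicalRing K] [T2Space K]

theorem one_sub_mul_tsum_qBinomialTerm {u : K⟦X⟧} (hu : constantCoeff u = 0) (v : K⟦X⟧) :
    (1 - u) * ∑' j, qBinomialTerm u v j =
      (1 - v) * ∑' j, qBinomialTerm (u * X) (v * X) j := by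
  have hF := summable_qBinomialTerm hu v
  have hG := summable_qBinomialTerm (u := u * X) (by simp [hu]) (v * X)
  have hterm (j : ℕ) : qBinomialTerm u v (j + 1) - qBinomialTerm (u * X) (v * X) (j + 1) =
      u * qBinomialTerm u v j - v * qBinomialTerm (u * X) (v * X) j := by
    have hscale := qBinomialTerm_mul_X_pow u v 1
    simp only [pow_one, one_mul] at hscale
    rw [hscale, hscale]
    linear_combination one_sub_mul_qBinomialTerm_succ u v j
  have hsub : ∑' j, qBinomialTerm u v j - ∑' j, qBinomialTerm (u * X) (v * X) j =
      u * ∑' j, qBinomialTerm u v j - v * ∑' j, qBinomialTerm (u * X) (v * X) j := by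
    rw [← hF.tsum_sub hG, (hF.sub hG).tsum_eq_zero_add, qBinomialTerm_zero, qBinomialTerm_zero,
      sub_self, zero_add, tsum_congr hterm, (hF.mul_left u).tsum_sub (hG.mul_left v),
      hF.tsum_mul_left, hG.tsum_mul_left]
  linear_combination hsub

theorem qPochhammer_mul_tsum_qBinomialTerm {u : K⟦X⟧} (hu : constantCoeff u = 0) (v : K⟦X⟧)
    (n : ℕ) : qPochhammer u n * ∑' j, qBinomialTerm u v j =
      qPochhammer v n * ∑' j, qBinomialTerm (u * X ^ n) (v * X ^ n) j := by
  induction n with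
  | zero => simp [qPochhammer_zero_right]
  | succ n ih =>
    have hstep := one_sub_mul_tsum_qBinomialTerm (u := u * X ^ n) (by simp [hu]) (v * X ^ n)
    rw [mul_assoc, mul_assoc, ← pow_succ] at hstep
    rw [qPochhammer_succ, qPochhammer_succ]
    linear_combination (1 - u * X ^ n) * ih + qPochhammer v n * hstep

theorem tendsto_tsum_qBinomialTerm {u : K⟦X⟧} (hu : constantCoeff u = 0) (v : K⟦X⟧) :
    Tendsto (fun n ↦ ∑' j, qBinomialTerm (u * X ^ n) (v * X ^ n) j) atTop (𝓝 1) := by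
  refine tendsto_of_X_pow_dvd_sub fun n ↦ ?_
  have hsum := summable_qBinomialTerm (u := u * X ^ n) (by simp [hu]) (v * X ^ n)
  rw [hsum.tsum_eq_zero_add, qBinomialTerm_zero, add_sub_cancel_left]
  refine X_pow_dvd_of_hasSum ((summable_nat_add_iff 1).2 hsum).hasSum fun j ↦ ?_
  rw [qBinomialTerm_mul_X_pow, mul_add_one, pow_add]
  exact (dvd_mul_left _ _).mul_right _

/-- Cauchy's `q`-binomial theorem. -/
theorem hasSum_qBinomialTerm {u : K⟦X⟧} (hu : constantCoeff u = 0) (v : K⟦X⟧) :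
    HasSum (qBinomialTerm u v) (qPochhammerInf v * (qPochhammerInf u)⁻¹) := by
  have hlim := ((tendsto_qPochhammer v).mul (tendsto_tsum_qBinomialTerm hu v)).congr fun n ↦
    (qPochhammer_mul_tsum_qBinomialTerm hu v n).symm
  have hmul := tendsto_nhds_unique ((tendsto_qPochhammer u).mul_const _) hlim
  rw [mul_one] at hmul
  rw [← hmul, mul_right_comm, qPochhammerInf_mul_inv hu, one_mul]
  exact (summable_qBinomialTerm hu v).hasSum

theorem hasSum_qBinomialTerm_zero_left (v : K⟦X⟧) :
    HasSum (qBinomialTerm 0 v) (qPochhammerInf v) := by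
  have hu : constantCoeff (0 : K⟦X⟧) = 0 := map_zero _
  simpa only [qPochhammerInf_zero, inv_one, mul_one] using hasSum_qBinomialTerm hu v

theorem hasSum_qBinomialTerm_zero_right {u : K⟦X⟧} (hu : constantCoeff u = 0) :
    HasSum (qBinomialTerm u 0) (qPochhammerInf u)⁻¹ := by
  simpa only [qPochhammerInf_zero, one_mul] using hasSum_qBinomialTerm hu 0

end QBinomial

section CrankGeneratingFunction

variable {K : Type*} [Field K]

/-- The weight of `c` parts of size `i` used to count partitions by their number of ones and their
number of parts larger than `j`: the `c` ones have weight `g c`, each part larger than `j` has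
weight `z`. -/
def tailWeight (g : ℕ → K) (z : K) (j i c : ℕ) : K :=
  if i = 1 then g c else if j < i then z ^ c else 1

theorem prod_tailWeight {g : ℕ → K} (hg : g 0 = 1) (z : K) {j : ℕ} (hj : 1 ≤ j) {n : ℕ}
    (p : n.Partition) :
    p.parts.toFinsupp.prod (tailWeight g z j) =
      g (p.parts.count 1) * z ^ Multiset.card (p.parts.filter (j < ·)) := by
  have hsplit (i : ℕ) : tailWeight g z j i (p.parts.count i) =
      (if i = 1 then g (p.parts.count 1) else 1) * z ^ (p.parts.filter (j < ·)).count i := by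
    rw [tailWeight, Multiset.count_filter]
    split_ifs with h1 <;> simp_all
  have hone : ∏ i ∈ p.parts.toFinset, (if i = 1 then g (p.parts.count 1) else 1) =
      g (p.parts.count 1) := by
    rw [prod_ite_eq' p.parts.toFinset 1, ite_eq_left_iff, Multiset.mem_toFinset]
    intro h1
    rw [Multiset.count_eq_zero.2 h1, hg]
  rw [Finsupp.prod, Multiset.toFinsupp_support]
  simp only [Multiset.toFinsupp_apply, hsplit]
  rw [prod_mul_distrib, hone, prod_pow_eq_pow_sum, Multiset.sum_count_eq_card]
  exact fun i hi ↦ Multiset.mem_toFinset.2 (Multiset.mem_of_mem_filter hi)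

variable [TopologicalSpace K]

/-- The series `(1 - q) (zq; q)ⱼ / ((q; q)ⱼ (zq; q)_∞)`. For `1 ≤ j` it is the generating function
of the partitions without ones in which each part larger than `j` is weighted by `z`. -/
noncomputable def tailSeries (z : K) (j : ℕ) : K⟦X⟧ :=
  (1 - X) * qPochhammer (C z * X) j * (qPochhammer X j)⁻¹ * (qPochhammerInf (C z * X))⁻¹

theorem pow_mul_tailSeries {z : K} (hz : z ≠ 0) (c : ℕ) :
    (C z⁻¹ * X) ^ c * tailSeries z c =
      (1 - X) * (qPochhammerInf (C z * X))⁻¹ * qBinomialTerm (C z⁻¹ * X) (X ^ 2) c := by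
  have hfactor (i : ℕ) :
      C z⁻¹ * X - X ^ 2 * X ^ i = (C z⁻¹ * X) * (1 - C z * X * X ^ i) := by
    have hzz : C z⁻¹ * C z = (1 : K⟦X⟧) := by rw [← map_mul, inv_mul_cancel₀ hz, map_one]
    linear_combination X ^ 2 * X ^ i * hzz
  rw [qBinomialTerm, prod_congr rfl fun i _ ↦ hfactor i, prod_mul_distrib, prod_const, card_range,
    tailSeries, qPochhammer]
  ring

variable [IsTopologicalRing K] [T2Space K]

theorem one_add_tsum_smul_X_pow_mul (y : K) {i : ℕ} (hi : i ≠ 0) :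
    (1 + ∑' c, y ^ (c + 1) • X ^ (i * (c + 1))) * (1 - C y * X ^ i) = 1 := by
  have hx : constantCoeff (C y * X ^ i) = 0 := by simp [hi]
  have hpow (c : ℕ) : y ^ (c + 1) • X ^ (i * (c + 1)) = (C y * X ^ i) ^ (c + 1) := by
    rw [smul_eq_C_mul, mul_pow, ← pow_mul, map_pow]
  have hgeom := (WithPiTopology.summable_pow_of_constantCoeff_eq_zero hx).tsum_eq_zero_add
  rw [pow_zero] at hgeom
  rw [tsum_congr hpow, ← hgeom]
  exact WithPiTopology.tsum_pow_mul_one_sub_of_constantCoeff_eq_zero hx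

theorem one_add_tsum_smul_X_pow {g : ℕ → K} (hg : g 0 = 1) :
    1 + ∑' c, g (c + 1) • X ^ (c + 1) = PowerSeries.mk g := by
  have h := hasSum_of_monomials_self (PowerSeries.mk g)
  rw [← h.tsum_eq, h.summable.tsum_eq_zero_add]
  simp [hg, monomial_eq_C_mul_X_pow, smul_eq_C_mul]

theorem genFun_tailWeight_mul {g : ℕ → K} (hg : g 0 = 1) (z : K) {j : ℕ} (hj : 1 ≤ j) :
    Nat.Partition.genFun (tailWeight g z j) * qPochhammerInf (C z * X) * qPochhammer X j =
      PowerSeries.mk g * (1 - X) * qPochhammer (C z * X) j := by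
  set F : ℕ → K⟦X⟧ := fun i ↦
    1 + ∑' c, tailWeight g z j (i + 1) (c + 1) • X ^ ((i + 1) * (c + 1))
  have hsmall (i : ℕ) (hi : i < j) :
      F i * (1 - X * X ^ i) = if i = 0 then PowerSeries.mk g * (1 - X) else 1 := by
    split_ifs with h0
    · subst h0
      simp only [F, zero_add, tailWeight, if_true, one_mul, pow_zero, mul_one,
        one_add_tsum_smul_X_pow hg]
    · simpa [F, tailWeight, h0, Nat.not_le.2 hi, ← pow_succ'] using
        one_add_tsum_smul_X_pow_mul (1 : K) i.succ_ne_zero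
  have hlarge (i : ℕ) (hi : i ∉ range j) : F i * (1 - C z * X * X ^ i) = 1 := by
    have hij := not_lt.1 (mem_range.not.1 hi)
    simpa [F, tailWeight, show i ≠ 0 by omega, hij, mul_assoc, ← pow_succ']
      using one_add_tsum_smul_X_pow_mul z i.succ_ne_zero
  have hprod := ((Nat.Partition.hasProd_genFun (tailWeight g z j)).mul
    (hasProd_qPochhammerInf (C z * X))).unique (hasProd_prod_of_ne_finset_one hlarge)
  rw [hprod, qPochhammer, ← prod_mul_distrib,
    prod_congr rfl fun i hi ↦ by rw [mul_right_comm, hsmall i (mem_range.1 hi)], prod_mul_distrib,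
    prod_ite_eq', if_pos (mem_range.2 hj), qPochhammer]

theorem genFun_tailWeight {g : ℕ → K} (hg : g 0 = 1) (z : K) {j : ℕ} (hj : 1 ≤ j) :
    Nat.Partition.genFun (tailWeight g z j) = PowerSeries.mk g * tailSeries z j := by
  have hmul := genFun_tailWeight_mul hg z hj
  have hfin := qPochhammer_mul_inv (K := K) constantCoeff_X j
  have hinf := qPochhammerInf_mul_inv (a := C z * X) (by simp)
  rw [tailSeries]
  linear_combination (qPochhammer X j)⁻¹ * (qPochhammerInf (C z * X))⁻¹ * hmul -
    Nat.Partition.genFun (tailWeight g z j) *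
      (hfin * qPochhammerInf (C z * X) * (qPochhammerInf (C z * X))⁻¹ + hinf)

theorem sum_pow_card_filter_lt (z : K) {j : ℕ} (hj : 1 ≤ j) (c n : ℕ) :
    ∑ p : n.Partition with p.parts.count 1 = c, z ^ Multiset.card (p.parts.filter (j < ·)) =
      coeff n (X ^ c * tailSeries z j) := by
  have hgen {g : ℕ → K} (hg : g 0 = 1) :
      ∑ p : n.Partition, g (p.parts.count 1) * z ^ Multiset.card (p.parts.filter (j < ·)) =
        coeff n (PowerSeries.mk g * tailSeries z j) := by
    simp only [← genFun_tailWeight hg z hj, Nat.Partition.coeff_genFun, prod_tailWeight hg z hj]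
  have hzero := hgen (g := fun k ↦ if k = 0 then 1 else 0) (by simp)
  have hmk_zero : (PowerSeries.mk fun k ↦ if k = 0 then 1 else 0) = (1 : K⟦X⟧) := by
    ext; simp [coeff_one]
  simp only [hmk_zero, ite_mul, one_mul, zero_mul] at hzero
  rcases eq_or_ne c 0 with rfl | hc
  · simpa [sum_filter] using hzero
  have hboth := hgen (g := fun k ↦ (if k = 0 then 1 else 0) + if k = c then 1 else 0)
    (by simp [hc.symm])
  have hmk_both : (PowerSeries.mk fun k ↦ (if k = 0 then 1 else 0) + if k = c then 1 else 0) =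
      (1 + X ^ c : K⟦X⟧) := by
    ext; simp [coeff_one, coeff_X_pow]
  simp only [hmk_both, add_mul, ite_mul, one_mul, zero_mul, sum_add_distrib, map_add, hzero,
    add_right_inj] at hboth
  rwa [sum_filter]

theorem sum_zpow_crank_of_count_pos {z : K} (hz : z ≠ 0) {c : ℕ} (hc : 1 ≤ c) (n : ℕ) :
    ∑ p : n.Partition with p.parts.count 1 = c, z ^ p.crank =
      coeff n ((C z⁻¹ * X) ^ c * tailSeries z c) := by
  rw [mul_pow, mul_assoc, ← map_pow, coeff_C_mul, ← sum_pow_card_filter_lt z hc, mul_sum]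
  refine sum_congr rfl fun p hp ↦ ?_
  rw [Nat.Partition.crank, (mem_filter.1 hp).2, if_neg (by omega), zpow_sub₀ hz, zpow_natCast,
    zpow_natCast, div_eq_mul_inv, mul_comm, inv_pow]

theorem card_count_eq_zero_sup_le {k : ℕ} (hk : 1 ≤ k) (n : ℕ) :
    (#{p : n.Partition | p.parts.count 1 = 0 ∧ p.parts.sup ≤ k} : K) =
      coeff n ((1 - X) * (qPochhammer X k)⁻¹) := by
  have htail : tailSeries (0 : K) k = (1 - X) * (qPochhammer X k)⁻¹ := by
    simp [tailSeries, qPochhammer_zero_left, qPochhammerInf_zero]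
  have hsum := sum_pow_card_filter_lt (0 : K) hk 0 n
  have hsup (p : n.Partition) : p.parts.filter (k < ·) = 0 ↔ p.parts.sup ≤ k := by
    simp [Multiset.filter_eq_nil, Multiset.sup_le]
  simpa only [htail, pow_zero, one_mul, zero_pow_eq, Multiset.card_eq_zero, hsup, sum_boole,
    filter_filter] using hsum

theorem two_le_sup_of_count_eq_zero {n : ℕ} (hn : n ≠ 0) (p : n.Partition)
    (hp : p.parts.count 1 = 0) : 2 ≤ p.parts.sup := by
  obtain ⟨i, hi⟩ := Multiset.exists_mem_of_ne_zero (s := p.parts) fun h ↦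
    hn (by simpa [h] using p.parts_sum.symm)
  have hi1 : i ≠ 1 := fun h ↦ Multiset.count_eq_zero.1 hp (h ▸ hi)
  have hi0 := p.parts_pos hi
  exact le_trans (by omega) (Multiset.le_sup hi)

theorem card_count_eq_zero_sup_eq {n : ℕ} (hn : 2 ≤ n) (k : ℕ) :
    (#{p : n.Partition | p.parts.count 1 = 0 ∧ p.parts.sup = k} : K) =
      coeff n ((1 - X) * (X ^ k * (qPochhammer X k)⁻¹)) := by
  match k with
  | 0 | 1 =>
    rw [filter_eq_empty_iff.2 fun p _ hp ↦ by
      have := two_le_sup_of_count_eq_zero (by omega) p hp.1; omega, card_empty, Nat.cast_zero]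
    simp [qPochhammer, mul_left_comm _ X, PowerSeries.mul_inv_cancel, coeff_one, coeff_X,
      show n ≠ 0 by omega, show n ≠ 1 by omega]
  | k + 2 =>
    have hsplit : #{p : n.Partition | p.parts.count 1 = 0 ∧ p.parts.sup ≤ k + 2} =
        #{p : n.Partition | p.parts.count 1 = 0 ∧ p.parts.sup = k + 2} +
        #{p : n.Partition | p.parts.count 1 = 0 ∧ p.parts.sup ≤ k + 1} := by
      rw [← card_union_of_disjoint (disjoint_filter.2 fun p _ h h' ↦ by omega), ← filter_or]
      congr! 2 with p
      omega
    have hcast := congrArg (Nat.cast (R := K)) hsplit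
    rw [Nat.cast_add, card_count_eq_zero_sup_le (by omega), card_count_eq_zero_sup_le (by omega),
      ← sub_eq_iff_eq_add, ← map_sub] at hcast
    rw [← hcast, ← one_sub_mul_inv_qPochhammer_succ (k + 1)]
    ring_nf

theorem sum_zpow_crank_of_count_eq_zero {n : ℕ} (hn : 2 ≤ n) (z : K) :
    ∑ p : n.Partition with p.parts.count 1 = 0, z ^ p.crank = coeff n (tailSeries z 0) := by
  have heuler : HasSum (fun k ↦ (1 - X) * qBinomialTerm (C z * X) 0 k) (tailSeries z 0) := by
    have hu : constantCoeff (C z * X) = 0 := by simp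
    simpa [tailSeries, qPochhammer_zero_right] using
      (hasSum_qBinomialTerm_zero_right hu).mul_left (1 - X)
  refine HasSum.unique ?_ ((WithPiTopology.hasSum_iff_hasSum_coeff K).1 heuler n)
  convert hasSum_sum_filter_eq _ (fun p : n.Partition ↦ p.parts.sup) _ using 2 with k
  have hcrank : ∀ p ∈ ({p : n.Partition | p.parts.count 1 = 0 ∧ p.parts.sup = k} : Finset _),
      z ^ p.crank = z ^ k := fun p hp ↦ by
    obtain ⟨-, hcount, hsup⟩ := mem_filter.1 hp
    rw [Nat.Partition.crank, if_pos hcount, hsup, zpow_natCast]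
  rw [filter_filter, sum_congr rfl hcrank, sum_const, nsmul_eq_mul, card_count_eq_zero_sup_eq hn,
    qBinomialTerm_zero_right, mul_pow, ← map_pow, ← coeff_mul_C]
  ring_nf

/-- The crank generating function `(q; q)_∞ / ((zq; q)_∞ (q/z; q)_∞)`. -/
noncomputable def crankSeries (z : K) : K⟦X⟧ :=
  qPochhammerInf X * (qPochhammerInf (C z * X))⁻¹ * (qPochhammerInf (C z⁻¹ * X))⁻¹

theorem hasSum_crankSeries {z : K} (hz : z ≠ 0) :
    HasSum (fun c ↦ (C z⁻¹ * X) ^ c * tailSeries z c) (crankSeries z) := by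
  have hu : constantCoeff (C z⁻¹ * X) = 0 := by simp
  have hmul := (hasSum_qBinomialTerm hu (X ^ 2)).mul_left
    ((1 - X) * (qPochhammerInf (C z * X))⁻¹)
  have hsum : (1 - X) * (qPochhammerInf (C z * X))⁻¹ *
      (qPochhammerInf (X ^ 2) * (qPochhammerInf (C z⁻¹ * X))⁻¹) = crankSeries z := by
    rw [crankSeries, qPochhammerInf_eq_mul X 1]
    simp only [qPochhammer, prod_range_one, pow_zero, mul_one, pow_one, ← sq]
    ring
  simpa only [pow_mul_tailSeries hz, ← hsum] using hmul

theorem sum_zpow_crank {n : ℕ} (hn : 2 ≤ n) {z : K} (hz : z ≠ 0) :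
    ∑ p : n.Partition, z ^ p.crank = coeff n (crankSeries z) := by
  refine HasSum.unique ?_
    ((WithPiTopology.hasSum_iff_hasSum_coeff K).1 (hasSum_crankSeries hz) n)
  convert hasSum_sum_filter_eq _ (fun p : n.Partition ↦ p.parts.count 1) _ using 2 with c
  rcases Nat.eq_zero_or_pos c with rfl | hc
  · rw [sum_zpow_crank_of_count_eq_zero hn, pow_zero, one_mul]
  · rw [sum_zpow_crank_of_count_pos hz hc]

end CrankGeneratingFunction

section TripleProduct

/-- The exponent `m (m - 1) / 2` in the theta series. -/
def triangular (m : ℤ) : ℕ := (m * (m - 1) / 2).toNat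

theorem two_mul_triangular (m : ℤ) : 2 * (triangular m : ℤ) = m * (m - 1) := by
  have hnonneg : 0 ≤ m * (m - 1) := by
    rcases le_or_gt m 0 with hm | hm
    · exact mul_nonneg_of_nonpos_of_nonpos hm (by lia)
    · exact mul_nonneg hm.le (by lia)
  have heven : 2 ∣ m * (m - 1) := by
    simpa [mul_comm] using (Int.even_mul_succ_self (m - 1)).two_dvd
  rw [triangular]
  lia

theorem triangular_natCast (n : ℕ) : triangular n = n.choose 2 := by
  rw [Nat.choose_two_right]
  have hdouble := two_mul_triangular n
  have hchoose := Nat.two_mul_div_two_of_even (Nat.even_mul_pred_self n)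
  cases n with
  | zero => simp [triangular]
  | succ n =>
    zify at hchoose ⊢
    push_cast [Nat.add_sub_cancel] at hdouble hchoose ⊢
    linarith

theorem triangular_one_sub (m : ℤ) : triangular (1 - m) = triangular m := by
  rw [triangular, triangular]
  ring_nf

theorem triangular_add (m n : ℤ) :
    (triangular (m + n) : ℤ) = triangular m + m * n + triangular n := by
  have hm := two_mul_triangular m
  have hn := two_mul_triangular n
  have hmn := two_mul_triangular (m + n)
  linarith

theorem tendsto_triangular : Tendsto triangular cofinite atTop := by
  refine tendsto_atTop.2 fun b ↦ eventually_cofinite.2 <|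
    (Set.finite_Icc (-b : ℤ) (b + 1)).subset fun m (hm : ¬ b ≤ triangular m) ↦ ?_
  have hdouble := two_mul_triangular m
  constructor <;> by_contra! hlt <;> nlinarith

variable {K : Type*} [Field K]

/-- The `m`-th term `(-z)ᵐ q^(m (m - 1) / 2)` of Jacobi's theta series with base `q = X`. -/
noncomputable def thetaTerm (z : K) (m : ℤ) : K⟦X⟧ := C ((-z) ^ m) * X ^ triangular m

/-- The coefficient of `(-z)ⁿ` in the product of Jacobi's theta series with Euler's series for
`1 / (q / z; q)_∞` is the sum over `j` of these terms. -/
noncomputable def thetaEulerTerm (n : ℤ) (j : ℕ) : K⟦X⟧ :=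
  (-1) ^ j * X ^ (triangular (n + j) + j) * (qPochhammer X j)⁻¹

theorem X_pow_mul_thetaEulerTerm_succ (k j : ℕ) :
    X ^ (k + 1) * thetaEulerTerm (K := K) (-k) j =
      X ^ j * thetaEulerTerm (-(k + 1 : ℕ)) j := by
  have hexp : k + 1 + (triangular (-k + j) + j) =
      j + (triangular (-(k + 1 : ℕ) + j) + j) := by
    have h := two_mul_triangular (-k + j)
    have h' := two_mul_triangular (-(k + 1 : ℕ) + j)
    zify
    push_cast at h h' ⊢
    linarith
  have hpow := congrArg (X (R := K) ^ ·) hexp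
  simp only [pow_add] at hpow
  simp only [thetaEulerTerm, pow_add]
  linear_combination (-1) ^ j * (qPochhammer X j)⁻¹ * hpow

theorem one_sub_mul_thetaEulerTerm_succ (n : ℤ) (j : ℕ) :
    (1 - X ^ (j + 1)) * thetaEulerTerm (K := K) n (j + 1) = -X * thetaEulerTerm (n + 1) j := by
  rw [thetaEulerTerm, thetaEulerTerm, mul_left_comm, one_sub_mul_inv_qPochhammer_succ,
    show n + (j + 1 : ℕ) = n + 1 + j by push_cast; ring]
  ring

theorem thetaEulerTerm_natCast (n j : ℕ) :
    thetaEulerTerm (K := K) n j = X ^ n.choose 2 * qBinomialTerm 0 (X * X ^ n) j := by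
  have hexp : triangular (n + j) + j = n.choose 2 + ((n + 1) * j + j.choose 2) := by
    have h := triangular_add n j
    rw [triangular_natCast, triangular_natCast] at h
    zify
    linarith
  rw [thetaEulerTerm, hexp, qBinomialTerm_zero_left]
  ring

variable [TopologicalSpace K]

/-- The modified theta function `(q; q)_∞ (z; q)_∞ (q / z; q)_∞` with base `q = X`. -/
noncomputable def theta (z : K) : K⟦X⟧ :=
  qPochhammerInf X * qPochhammerInf (C z) * qPochhammerInf (C z⁻¹ * X)

theorem summable_thetaTerm (z : K) : Summable (thetaTerm z) :=
  summable_of_X_pow_dvd tendsto_triangular fun _ ↦ dvd_mul_left _ _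

theorem summable_thetaEulerTerm (n : ℤ) : Summable (thetaEulerTerm (K := K) n) := by
  refine summable_of_X_pow_dvd (d := id) (by simpa [Nat.cofinite_eq_atTop] using tendsto_id)
    fun j ↦ ?_
  rw [thetaEulerTerm, pow_add, id, ← mul_assoc]
  exact (dvd_mul_left _ _).mul_right _

variable [IsTopologicalRing K] [T2Space K]

theorem tsum_thetaEulerTerm_natCast (n : ℕ) :
    ∑' j, thetaEulerTerm (K := K) n j =
      qPochhammerInf X * (X ^ n.choose 2 * (qPochhammer X n)⁻¹) := by
  have hEuler := hasSum_qBinomialTerm_zero_left (X * X ^ n : K⟦X⟧)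
  rw [tsum_congr (thetaEulerTerm_natCast n), hEuler.summable.tsum_mul_left, hEuler.tsum_eq,
    qPochhammerInf_eq_mul X n]
  linear_combination -X ^ n.choose 2 * qPochhammerInf (X * X ^ n) *
    qPochhammer_mul_inv (K := K) constantCoeff_X n

theorem tsum_thetaEulerTerm_succ (k : ℕ) :
    ∑' j, thetaEulerTerm (K := K) (-(k + 1 : ℕ)) j =
      (X ^ (k + 1) - X) * ∑' j, thetaEulerTerm (-k) j := by
  have hk := summable_thetaEulerTerm (K := K) (-k)
  have hk' := summable_thetaEulerTerm (K := K) (-(k + 1 : ℕ))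
  have hX : Summable fun j ↦ X ^ j * thetaEulerTerm (K := K) (-(k + 1 : ℕ)) j := by
    simpa only [X_pow_mul_thetaEulerTerm_succ] using hk.mul_left (X ^ (k + 1))
  have hleft : ∑' j, (1 - X ^ j) * thetaEulerTerm (K := K) (-(k + 1 : ℕ)) j =
      ∑' j, thetaEulerTerm (-(k + 1 : ℕ)) j - X ^ (k + 1) * ∑' j, thetaEulerTerm (-k) j := by
    simp only [sub_mul, one_mul]
    rw [hk'.tsum_sub hX, ← hk.tsum_mul_left, tsum_congr (X_pow_mul_thetaEulerTerm_succ k)]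
  have hright : ∑' j, (1 - X ^ j) * thetaEulerTerm (K := K) (-(k + 1 : ℕ)) j =
      -X * ∑' j, thetaEulerTerm (-k) j := by
    rw [Summable.tsum_eq_zero_add (by simpa only [sub_mul, one_mul] using hk'.sub hX), pow_zero,
      sub_self, zero_mul, zero_add, ← hk.tsum_mul_left]
    refine tsum_congr fun j ↦ ?_
    rw [one_sub_mul_thetaEulerTerm_succ]
    push_cast
    ring_nf
  linear_combination hright - hleft

theorem tsum_thetaEulerTerm_neg (k : ℕ) :
    ∑' j, thetaEulerTerm (K := K) (-(k + 1 : ℕ)) j = 0 := by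
  induction k with
  | zero => rw [tsum_thetaEulerTerm_succ, zero_add, pow_one, sub_self, zero_mul]
  | succ k ih => rw [tsum_thetaEulerTerm_succ, ih, mul_zero]

theorem hasSum_C_mul_tsum_thetaEulerTerm (z : K) :
    HasSum (fun n : ℤ ↦ C ((-z) ^ n) * ∑' j, thetaEulerTerm n j)
      (qPochhammerInf X * qPochhammerInf (C z)) := by
  have hterm (n : ℕ) : C ((-z) ^ (n : ℤ)) * ∑' j, thetaEulerTerm n j =
      qPochhammerInf X * qBinomialTerm 0 (C z) n := by
    rw [tsum_thetaEulerTerm_natCast, qBinomialTerm_zero_left, zpow_natCast, map_pow, map_neg]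
    ring
  rw [← (Nat.cast_injective (R := ℤ)).hasSum_iff]
  · simpa only [Function.comp_def, hterm] using
      (hasSum_qBinomialTerm_zero_left (C z)).mul_left (qPochhammerInf X)
  · intro n hn
    obtain ⟨k, rfl | rfl⟩ := n.eq_nat_or_neg
    · exact absurd ⟨k, rfl⟩ hn
    · obtain ⟨k, rfl⟩ := Nat.exists_eq_succ_of_ne_zero (show k ≠ 0 by rintro rfl; simp at hn)
      rw [tsum_thetaEulerTerm_neg, mul_zero]

end TripleProduct

section ThetaSeries

variable {K : Type*} [Field K] [TopologicalSpace K]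

/-- Euler's pentagonal number theorem. -/
theorem hasSum_pentagonal [IsTopologicalRing K] [T2Space K] :
    HasSum (fun k : ℤ ↦ C ((-1 : K) ^ k) * X ^ pentagonal k) (qPochhammerInf X) := by
  have hprod : qPochhammerInf X = pentagonalSeries K := by
    simpa only [qPochhammerInf, pow_succ'] using WithPiTopology.tprod_one_sub_X_pow K
  rw [hprod]
  convert WithPiTopology.hasSum_pentagonalSeries K using 3 with k
  rw [← Int.cast_negOnePow]
  simp

variable [DiscreteTopology K]

theorem hasSum_C_mul_thetaEulerTerm {z : K} (hz : z ≠ 0) :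
    HasSum (fun p : ℤ × ℕ ↦ C ((-z) ^ p.1) * thetaEulerTerm p.1 p.2)
      ((∑' m, thetaTerm z m) * (qPochhammerInf (C z⁻¹ * X))⁻¹) := by
  have hu : constantCoeff (C z⁻¹ * X) = 0 := by simp
  have hmul := hasSum_mul (summable_thetaTerm z).hasSum (hasSum_qBinomialTerm_zero_right hu)
  let shear : ℤ × ℕ ≃ ℤ × ℕ :=
    { toFun p := (p.1 + p.2, p.2)
      invFun p := (p.1 - p.2, p.2)
      left_inv p := by simp
      right_inv p := by simp }
  rw [← shear.hasSum_iff] at hmul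
  convert hmul using 2 with p
  obtain ⟨n, j⟩ := p
  have hC : C ((-z) ^ (n + j)) * C z⁻¹ ^ j = C ((-z) ^ n) * (-1) ^ j := by
    rw [zpow_add₀ (neg_ne_zero.2 hz), zpow_natCast, ← map_pow, ← map_mul, mul_assoc, ← mul_pow,
      neg_mul, mul_inv_cancel₀ hz]
    simp
  simp only [Function.comp_apply, shear, Equiv.coe_fn_mk, thetaTerm, thetaEulerTerm,
    qBinomialTerm_zero_right, mul_pow]
  linear_combination -X ^ triangular (n + j) * X ^ j * (qPochhammer X j)⁻¹ * hC

/-- Jacobi's triple product identity. -/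
theorem hasSum_thetaTerm {z : K} (hz : z ≠ 0) : HasSum (thetaTerm z) (theta z) := by
  have hfiber := (hasSum_C_mul_thetaEulerTerm hz).prod_fiberwise fun n ↦
    (summable_thetaEulerTerm n).hasSum.mul_left (C ((-z) ^ n))
  have hinv := qPochhammerInf_mul_inv (a := C z⁻¹ * X) (by simp)
  rw [theta, (hasSum_C_mul_tsum_thetaEulerTerm z).unique hfiber, mul_assoc, mul_comm _⁻¹, hinv,
    mul_one]
  exact (summable_thetaTerm z).hasSum

end ThetaSeries

section RootsOfUnity

theorem prod_range_one_sub_pow_mul {R : Type*} [CommRing R] [IsDomain R] {t : ℕ} (ht : 0 < t)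
    {ζ : R} (hζ : IsPrimitiveRoot ζ t) (x : R) :
    ∏ j ∈ range t, (1 - ζ ^ j * x) = 1 - x ^ t := by
  have : NeZero t := ⟨ht.ne'⟩
  rw [← one_pow t, hζ.pow_sub_pow_eq_prod_sub_mul 1 x ht, one_pow]
  refine prod_nbij (ζ ^ ·) (fun j _ ↦ ?_) (fun i hi j hj hij ↦ ?_) (fun y hy ↦ ?_) fun _ _ ↦ rfl
  · rw [Polynomial.mem_nthRootsFinset ht, pow_right_comm, hζ.pow_eq_one, one_pow]
  · exact hζ.pow_inj (mem_range.1 hi) (mem_range.1 hj) hij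
  · obtain ⟨i, hi, rfl⟩ := hζ.eq_pow_of_pow_eq_one ((Polynomial.mem_nthRootsFinset ht _).1 hy)
    exact ⟨i, mem_coe.2 (mem_range.2 hi), rfl⟩

section CommRing

variable {R : Type*} [CommRing R]

theorem coeff_mul_eq_zero_of_not_dvd {t : ℕ} {f g : R⟦X⟧} (hf : ∀ d, ¬ t ∣ d → coeff d f = 0)
    (hg : ∀ d, ¬ t ∣ d → coeff d g = 0) (d : ℕ) (hd : ¬ t ∣ d) : coeff d (f * g) = 0 := by
  rw [coeff_mul]
  refine sum_eq_zero fun x hx ↦ ?_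
  rw [HasAntidiagonal.mem_antidiagonal] at hx
  by_cases hx1 : t ∣ x.1
  · rw [hg x.2 fun hx2 ↦ hd (hx ▸ dvd_add hx1 hx2), mul_zero]
  · rw [hf x.1 hx1, zero_mul]

theorem coeff_eq_zero_of_mul {t r : ℕ} {f g : R⟦X⟧} (hg0 : constantCoeff g = 1)
    (hg : ∀ d, ¬ t ∣ d → coeff d g = 0) (hfg : ∀ n, n ≡ r [MOD t] → coeff n (f * g) = 0)
    (n : ℕ) (hn : n ≡ r [MOD t]) : coeff n f = 0 := by
  induction n using Nat.strong_induction_on with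
  | _ n ih =>
    have hcoeff := hfg n hn
    rw [coeff_mul, sum_eq_single (n, 0)] at hcoeff
    · simpa [hg0] using hcoeff
    · intro x hx hne
      rw [HasAntidiagonal.mem_antidiagonal] at hx
      by_cases hd : t ∣ x.2
      · have hx2 : x.2 ≠ 0 := fun h ↦ hne (Prod.ext (by simpa [h] using hx) h)
        have hmod : x.1 ≡ n [MOD t] := (Nat.modEq_iff_dvd' (by lia)).2 (by
          rwa [← hx, Nat.add_sub_cancel_left])
        rw [ih x.1 (by lia) (hmod.trans hn), zero_mul]
      · rw [hg _ hd, mul_zero]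
    · simp

theorem coeff_prod_one_sub_X_pow_eq_zero {t d : ℕ} (s : Finset ℕ) (hd : ¬ t ∣ d) :
    coeff d (∏ i ∈ s, (1 - X ^ ((i + 1) * t) : R⟦X⟧)) = 0 := by
  refine prod_induction _ (fun f : R⟦X⟧ ↦ ∀ d, ¬ t ∣ d → coeff d f = 0)
    (fun _ _ ↦ coeff_mul_eq_zero_of_not_dvd) (fun d hd ↦ ?_) (fun i _ d hd ↦ ?_) d hd
  all_goals
    have hd0 : d ≠ 0 := fun h ↦ hd (h ▸ dvd_zero t)
  · simp [coeff_one, hd0]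
  · have hdi : d ≠ (i + 1) * t := fun h ↦ hd (h ▸ dvd_mul_left t _)
    simp [coeff_one, coeff_X_pow, hd0, hdi]

end CommRing

variable {K : Type*} [Field K] [TopologicalSpace K]

theorem coeff_prod_qPochhammerInf_eq_zero [IsTopologicalRing K] [T2Space K] {t : ℕ} (ht : 0 < t)
    {ζ : K} (hζ : IsPrimitiveRoot ζ t) (d : ℕ) (hd : ¬ t ∣ d) :
    coeff d (∏ j ∈ range t, qPochhammerInf (C (ζ ^ j) * X)) = 0 := by
  have hprod := hasProd_prod (s := range t) fun j _ ↦ hasProd_qPochhammerInf (C (ζ ^ j) * X)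
  have hfactor (i : ℕ) : ∏ j ∈ range t, (1 - C (ζ ^ j) * X * X ^ i) = 1 - X ^ ((i + 1) * t) := by
    rw [pow_mul, ← prod_range_one_sub_pow_mul ht (hζ.map_of_injective C_injective)]
    simp only [map_pow, mul_assoc, ← pow_succ']
  simp only [hfactor] at hprod
  refine tendsto_nhds_unique
    (((WithPiTopology.continuous_coeff K d).tendsto _).comp hprod.tendsto_prod_nat) ?_
  simp [Function.comp_def, coeff_prod_one_sub_X_pow_eq_zero _ hd]

/-- The product `(zq; q)_∞ (q/z; q)_∞` with base `q = X`, which is symmetric under `z ↦ 1/z`. -/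
noncomputable def symmPochhammer (z : K) : K⟦X⟧ :=
  qPochhammerInf (C z * X) * qPochhammerInf (C z⁻¹ * X)

theorem symmPochhammer_inv (z : K) : symmPochhammer z⁻¹ = symmPochhammer z := by
  rw [symmPochhammer, symmPochhammer, inv_inv, mul_comm]

theorem prod_qPochhammerInf_eq_mul_prod_symmPochhammer {h : ℕ} {ζ : K}
    (hζ : ζ ^ (2 * h + 1) = 1) :
    ∏ j ∈ range (2 * h + 1), qPochhammerInf (C (ζ ^ j) * X) =
      qPochhammerInf X * ∏ j ∈ range h, symmPochhammer (ζ ^ (j + 1)) := by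
  have hinv (j : ℕ) (hj : j < h) : ζ ^ (h + (h - 1 - j) + 1) = (ζ ^ (j + 1))⁻¹ := by
    refine eq_inv_of_mul_eq_one_left ?_
    rw [← pow_add, ← hζ]
    congr 1
    lia
  rw [prod_range_succ', two_mul, prod_range_add,
    ← prod_range_reflect (fun j ↦ qPochhammerInf (C (ζ ^ (h + j + 1)) * X)),
    ← prod_mul_distrib, pow_zero, map_one, one_mul, mul_comm]
  exact congrArg (qPochhammerInf X * ·) <| prod_congr rfl fun j hj ↦ by
    rw [hinv j (mem_range.1 hj), symmPochhammer]

variable [T2Space K]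

theorem crankSeries_mul_symmPochhammer (z : K) :
    crankSeries z * symmPochhammer z = qPochhammerInf X := by
  have hz := qPochhammerInf_mul_inv (a := C z * X) (by simp)
  have hz' := qPochhammerInf_mul_inv (a := C z⁻¹ * X) (by simp)
  rw [crankSeries, symmPochhammer]
  linear_combination qPochhammerInf X *
    (hz * qPochhammerInf (C z⁻¹ * X) * (qPochhammerInf (C z⁻¹ * X))⁻¹ + hz')

variable [IsTopologicalRing K]

theorem theta_eq_C_mul (z : K) :
    theta z = C (1 - z) * (qPochhammerInf X * symmPochhammer z) := by
  rw [theta, symmPochhammer, qPochhammerInf_eq_mul (C z) 1, qPochhammer, prod_range_one, pow_zero,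
    mul_one, pow_one, map_sub, map_one]
  ring

/-- The denominators of the crank series at all primitive roots of unity of odd order complete
each other to a series in `X ^ t`, which does not affect vanishing in a residue class mod `t`. -/
theorem coeff_crankSeries_eq_zero {h r : ℕ} {ζ : K} (hζ : IsPrimitiveRoot ζ (2 * h + 3))
    {c : K} (hc : c ≠ 0) {f : K⟦X⟧}
    (hf : C c * (qPochhammerInf X ^ 2 * ∏ j ∈ range h, symmPochhammer (ζ ^ (j + 2))) = f)
    (hcoeff : ∀ n, n ≡ r [MOD 2 * h + 3] → coeff n f = 0) {n : ℕ}
    (hn : n ≡ r [MOD 2 * h + 3]) : coeff n (crankSeries ζ) = 0 := by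
  have hprod := prod_qPochhammerInf_eq_mul_prod_symmPochhammer (h := h + 1) hζ.pow_eq_one
  rw [prod_range_succ' _ h, zero_add, pow_one] at hprod
  have hcrank : C c * crankSeries ζ *
      ∏ j ∈ range (2 * h + 3), qPochhammerInf (C (ζ ^ j) * X) = f := by
    rw [← hf, show 2 * h + 3 = 2 * (h + 1) + 1 by ring, hprod]
    linear_combination C c * qPochhammerInf X *
      (∏ j ∈ range h, symmPochhammer (ζ ^ (j + 2))) * crankSeries_mul_symmPochhammer ζ
  have hzero := coeff_eq_zero_of_mul (f := C c * crankSeries ζ)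
    (by rw [map_prod]; exact prod_eq_one fun j _ ↦ constantCoeff_qPochhammerInf (by simp))
    (coeff_prod_qPochhammerInf_eq_zero (by lia) hζ)
    (by rwa [hcrank]) n hn
  simpa [hc] using hzero

end RootsOfUnity

section FiveSeven

theorem dvd_of_pentagonal_add_triangular {k m : ℤ}
    (h : pentagonal k + triangular m ≡ 4 [MOD 5]) : (5 : ℤ) ∣ 2 * m - 1 := by
  have hsum : (pentagonal k + triangular m : ZMod 5) = 4 := by
    exact_mod_cast (ZMod.natCast_eq_natCast_iff _ _ 5).2 h
  have hk : (2 * pentagonal k : ZMod 5) = k * (3 * k - 1) := by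
    exact_mod_cast congrArg (Int.cast : ℤ → ZMod 5) (two_mul_natCast_pentagonal k)
  have hm : (2 * triangular m : ZMod 5) = m * (m - 1) := by
    exact_mod_cast congrArg (Int.cast : ℤ → ZMod 5) (two_mul_triangular m)
  have hquad : ∀ k m : ZMod 5, k * (3 * k - 1) + m * (m - 1) = 2 * 4 → 2 * m - 1 = 0 := by decide
  refine (ZMod.intCast_zmod_eq_zero_iff_dvd _ 5).1 ?_
  exact_mod_cast hquad k m (by rw [← hk, ← hm, ← hsum, mul_add])

theorem dvd_of_triangular_add_triangular {l m : ℤ}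
    (h : triangular l + triangular m ≡ 5 [MOD 7]) : (7 : ℤ) ∣ 2 * m - 1 := by
  have hsum : (triangular l + triangular m : ZMod 7) = 5 := by
    exact_mod_cast (ZMod.natCast_eq_natCast_iff _ _ 7).2 h
  have htwo (x : ℤ) : (2 * triangular x : ZMod 7) = x * (x - 1) := by
    exact_mod_cast congrArg (Int.cast : ℤ → ZMod 7) (two_mul_triangular x)
  have hquad : ∀ l m : ZMod 7, l * (l - 1) + m * (m - 1) = 2 * 5 → 2 * m - 1 = 0 := by decide
  refine (ZMod.intCast_zmod_eq_zero_iff_dvd _ 7).1 ?_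
  exact_mod_cast hquad l m (by rw [← htwo, ← htwo, ← hsum, mul_add])

variable {K : Type*} [Field K]

theorem neg_zpow_one_sub {t : ℕ} {ξ : K} (hξ : ξ ^ t = 1) (h0 : ξ ≠ 0) {m : ℤ}
    (hm : (t : ℤ) ∣ 2 * m - 1) : (-ξ) ^ (1 - m) = -(-ξ) ^ m := by
  obtain ⟨c, hc⟩ := hm
  have hpow : (-ξ) ^ (1 - 2 * m) = -1 := by
    rw [Odd.neg_zpow ⟨-m, by ring⟩, show 1 - 2 * m = t * -c by linear_combination -hc, zpow_mul,
      zpow_natCast, hξ, one_zpow]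
  rw [show 1 - m = m + (1 - 2 * m) by ring, zpow_add₀ (neg_ne_zero.2 h0), hpow, mul_neg_one]

variable [CharZero K] [TopologicalSpace K] [DiscreteTopology K]

theorem coeff_mul_theta_eq_zero {ι : Type*} {g : ι → K} {e : ι → ℕ} {f : K⟦X⟧}
    (hf : HasSum (fun i ↦ C (g i) * X ^ e i) f) {t n : ℕ} {ξ : K} (hξ : ξ ^ t = 1) (h0 : ξ ≠ 0)
    (hn : ∀ i m, e i + triangular m = n → (t : ℤ) ∣ 2 * m - 1) : coeff n (f * theta ξ) = 0 := by
  have hsum := (WithPiTopology.hasSum_iff_hasSum_coeff K).1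
    (hasSum_mul hf (hasSum_thetaTerm h0)) n
  refine eq_zero_of_hasSum_of_equiv hsum ((Equiv.refl ι).prodCongr (Equiv.subLeft 1))
    fun ⟨i, m⟩ ↦ ?_
  have hterm (m : ℤ) : coeff n (C (g i) * X ^ e i * thetaTerm ξ m) =
      if n = e i + triangular m then g i * (-ξ) ^ m else 0 := by
    rw [thetaTerm, mul_mul_mul_comm, ← map_mul, ← pow_add, coeff_C_mul, coeff_X_pow, mul_ite,
      mul_one, mul_zero]
  simp only [Equiv.prodCongr_apply, Prod.map, Equiv.refl_apply, Equiv.subLeft_apply, hterm,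
    triangular_one_sub]
  split_ifs with h
  · rw [neg_zpow_one_sub hξ h0 (hn i m h.symm), mul_neg]
  · rw [neg_zero]

theorem coeff_crankSeries_five {ζ : K} (hζ : IsPrimitiveRoot ζ 5) {n : ℕ} (hn : n ≡ 4 [MOD 5]) :
    coeff n (crankSeries ζ) = 0 := by
  have h0 : ζ ^ 2 ≠ 0 := pow_ne_zero 2 (hζ.ne_zero (by norm_num))
  have hone : 1 - ζ ^ 2 ≠ 0 := sub_ne_zero.2
    (hζ.pow_ne_one_of_pos_of_lt (by norm_num) (by norm_num)).symm
  have hroot : (ζ ^ 2) ^ 5 = 1 := by rw [pow_right_comm, hζ.pow_eq_one, one_pow]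
  refine coeff_crankSeries_eq_zero (h := 1) (f := qPochhammerInf X * theta (ζ ^ 2)) hζ hone ?_
    (fun n hn ↦ ?_) hn
  · rw [prod_range_one, theta_eq_C_mul]
    ring
  · exact coeff_mul_theta_eq_zero hasSum_pentagonal hroot h0
      fun k m h ↦ dvd_of_pentagonal_add_triangular (h ▸ hn)

theorem coeff_crankSeries_seven {ζ : K} (hζ : IsPrimitiveRoot ζ 7) {n : ℕ}
    (hn : n ≡ 5 [MOD 7]) : coeff n (crankSeries ζ) = 0 := by
  have h0 (j : ℕ) : ζ ^ j ≠ 0 := pow_ne_zero j (hζ.ne_zero (by norm_num))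
  have hone {j : ℕ} (hj : j ≠ 0) (hlt : j < 7) : 1 - ζ ^ j ≠ 0 :=
    sub_ne_zero.2 (hζ.pow_ne_one_of_pos_of_lt hj hlt).symm
  have hroot : (ζ ^ 3) ^ 7 = 1 := by rw [pow_right_comm, hζ.pow_eq_one, one_pow]
  refine coeff_crankSeries_eq_zero (h := 2) (f := theta (ζ ^ 2) * theta (ζ ^ 3)) hζ
    (mul_ne_zero (hone two_ne_zero (by norm_num)) (hone three_ne_zero (by norm_num))) ?_
    (fun n hn ↦ ?_) hn
  · rw [prod_range_succ, prod_range_one, theta_eq_C_mul, theta_eq_C_mul, map_mul]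
    ring
  · exact coeff_mul_theta_eq_zero (hasSum_thetaTerm (h0 2)) hroot (h0 3)
      fun l m h ↦ dvd_of_triangular_add_triangular (h ▸ hn)

end FiveSeven

section Winquist

/-- The exponent of `q` in the term of `θ(u) θ(v) θ(uv) θ(u / v)` with indices `s - k - l`,
`t - 1 - k + l`, `k`, `l`, a parametrization in which `u` and `v` have exponents `s` and `t - 1`. -/
def winquistExponent (s t k l : ℤ) : ℕ :=
  triangular (s - k - l) + triangular (t - 1 - k + l) + (triangular k + triangular l)

theorem two_mul_winquistExponent (s t k l : ℤ) :
    2 * (winquistExponent s t k l : ℤ) = 3 * k ^ 2 - (2 * (s + t) - 3) * k + 3 * l ^ 2 -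
      (2 * (s - t) + 3) * l + s ^ 2 + (t - 1) ^ 2 - s - t + 1 := by
  rw [winquistExponent]
  push_cast
  linear_combination two_mul_triangular (s - k - l) + two_mul_triangular (t - 1 - k + l) +
    two_mul_triangular k + two_mul_triangular l

theorem exists_two_mul_eq_of_not_three_dvd {m : ℤ} (hm : ¬ 3 ∣ m) :
    ∃ c, c * c = 1 ∧ 2 * m = 6 * (m / 3) + 3 + c := by
  rcases (by lia : m = 3 * (m / 3) + 1 ∨ m = 3 * (m / 3) + 2) with h | h
  · exact ⟨-1, by norm_num, by lia⟩
  · exact ⟨1, by norm_num, by lia⟩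

theorem six_mul_winquistExponent {s t : ℤ} (hadd : ¬ 3 ∣ s + t) (hsub : ¬ 3 ∣ s - t) :
    6 * (winquistExponent s t ((s + t) / 3) ((s - t) / 3 + 1) : ℤ) =
      s ^ 2 - 3 * s + t ^ 2 - 3 * t + 2 := by
  obtain ⟨c, hc, hadd⟩ := exists_two_mul_eq_of_not_three_dvd hadd
  obtain ⟨d, hd, hsub⟩ := exists_two_mul_eq_of_not_three_dvd hsub
  have hexp := two_mul_winquistExponent s t ((s + t) / 3) ((s - t) / 3 + 1)
  generalize (s + t) / 3 = j at *
  generalize (s - t) / 3 = i at *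
  obtain rfl : c = 2 * (s + t) - 6 * j - 3 := by linear_combination -hadd
  obtain rfl : d = 2 * (s - t) - 6 * i - 3 := by linear_combination -hsub
  linarith

variable {K : Type*} [Field K]

theorem neg_one_zpow_eq_neg {a b : ℤ} (h : Odd (a - b)) : (-1 : K) ^ a = -(-1) ^ b := by
  rw [show a = a - b + b by ring, zpow_add₀ (neg_ne_zero.2 one_ne_zero), h.neg_one_zpow,
    neg_one_mul]

/-- The terms of `θ(u) θ(v) θ(uv) θ(u / v)`, indexed as for `winquistExponent`. -/
noncomputable def winquistSummand (u v : K) (s t k l : ℤ) : K⟦X⟧ :=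
  C ((-1) ^ (s + t - 1 - k + l) * (u ^ s * v ^ (t - 1))) * X ^ winquistExponent s t k l

theorem thetaTerm_mul_thetaTerm {u v : K} (hu : u ≠ 0) (hv : v ≠ 0) (s t k l : ℤ) :
    thetaTerm u (s - k - l) * thetaTerm v (t - 1 - k + l) *
      (thetaTerm (u * v) k * thetaTerm (u / v) l) = winquistSummand u v s t k l := by
  have hneg : (-1 : K) ≠ 0 := neg_ne_zero.2 one_ne_zero
  have hcoeff : (-u) ^ (s - k - l) * (-v) ^ (t - 1 - k + l) * ((-(u * v)) ^ k * (-(u / v)) ^ l) =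
      (-1) ^ (s + t - 1 - k + l) * (u ^ s * v ^ (t - 1)) := by
    rw [← neg_one_mul u, ← neg_one_mul v, ← neg_one_mul (u * v), ← neg_one_mul (u / v)]
    simp only [mul_zpow, div_zpow, zpow_add₀ hneg, zpow_sub₀ hneg, zpow_sub₀ hu, zpow_add₀ hv,
      zpow_sub₀ hv]
    field_simp
  simp only [thetaTerm, winquistSummand, winquistExponent, ← hcoeff, map_mul, pow_add]
  ring

theorem winquistSummand_reflect_left (u v : K) {s t j : ℤ} (hj : s + t = 3 * j) (k l : ℤ) :
    winquistSummand u v s t (2 * j - 1 - k) l = -winquistSummand u v s t k l := by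
  have hexp : winquistExponent s t (2 * j - 1 - k) l = winquistExponent s t k l := by
    zify
    have h := two_mul_winquistExponent s t (2 * j - 1 - k) l
    have h' := two_mul_winquistExponent s t k l
    rw [hj] at h h'
    linarith
  have hodd : Odd (s + t - 1 - (2 * j - 1 - k) + l - (s + t - 1 - k + l)) := ⟨k - j, by ring⟩
  rw [winquistSummand, winquistSummand, hexp, neg_one_zpow_eq_neg hodd, neg_mul, map_neg, neg_mul]

theorem winquistSummand_reflect_right (u v : K) {s t i : ℤ} (hi : s - t = 3 * i) (k l : ℤ) :
    winquistSummand u v s t k (2 * i + 1 - l) = -winquistSummand u v s t k l := by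
  have hexp : winquistExponent s t k (2 * i + 1 - l) = winquistExponent s t k l := by
    zify
    have h := two_mul_winquistExponent s t k (2 * i + 1 - l)
    have h' := two_mul_winquistExponent s t k l
    rw [hi] at h h'
    linarith
  have hodd : Odd (s + t - 1 - k + (2 * i + 1 - l) - (s + t - 1 - k + l)) := ⟨i - l, by ring⟩
  rw [winquistSummand, winquistSummand, hexp, neg_one_zpow_eq_neg hodd, neg_mul, map_neg, neg_mul]

theorem winquistSummand_add (u v : K) {s t i j c d : ℤ} (hc : c * c = 1) (hd : d * d = 1)
    (hj : 2 * (s + t) = 6 * j + 3 + c) (hi : 2 * (s - t) = 6 * i + 3 + d) (k l : ℤ) :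
    winquistSummand u v s t (k + j) (l + (i + 1)) = winquistSummand u v s t j (i + 1) *
      (C ((-1) ^ k) * X ^ pentagonal (c * k) * (C ((-1) ^ l) * X ^ pentagonal (d * l))) := by
  have hexp : winquistExponent s t (k + j) (l + (i + 1)) =
      winquistExponent s t j (i + 1) + (pentagonal (c * k) + pentagonal (d * l)) := by
    have h := two_mul_winquistExponent s t (k + j) (l + (i + 1))
    have h' := two_mul_winquistExponent s t j (i + 1)
    rw [hj, hi] at h h'
    zify
    refine mul_left_cancel₀ two_ne_zero ?_
    linear_combination h - h' - two_mul_natCast_pentagonal (c * k) -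
      two_mul_natCast_pentagonal (d * l) - 3 * k ^ 2 * hc - 3 * l ^ 2 * hd
  have hsign : (-1 : K) ^ (s + t - 1 - (k + j) + (l + (i + 1))) =
      (-1) ^ (s + t - 1 - j + (i + 1)) * ((-1) ^ k * (-1) ^ l) := by
    rw [show s + t - 1 - (k + j) + (l + (i + 1)) = s + t - 1 - j + (i + 1) + (-k + l) by ring,
      zpow_add₀ (by simp), zpow_add₀ (by simp) (-k), zpow_neg, ← inv_zpow, inv_neg_one]
  simp only [winquistSummand, hexp, hsign, map_mul, pow_add]
  ring

/-- The general term of the double series in Winquist's identity. -/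
noncomputable def winquistTerm (u v : K) (s t : ℤ) : K⟦X⟧ :=
  if 3 ∣ s + t ∨ 3 ∣ s - t then 0 else winquistSummand u v s t ((s + t) / 3) ((s - t) / 3 + 1)

variable [TopologicalSpace K] [DiscreteTopology K]

theorem hasSum_pentagonal_mul {c : ℤ} (hc : c * c = 1) :
    HasSum (fun k : ℤ ↦ C ((-1 : K) ^ k) * X ^ pentagonal (c * k)) (qPochhammerInf X) := by
  rcases mul_self_eq_one_iff.1 hc with rfl | rfl
  · simpa only [one_mul] using hasSum_pentagonal
  · rw [← (Equiv.neg ℤ).hasSum_iff]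
    simpa [Function.comp_def, zpow_neg, ← inv_zpow] using hasSum_pentagonal (K := K)

theorem hasSum_winquistSummand_fiber (u v : K) {s t : ℤ} (hadd : ¬ 3 ∣ s + t)
    (hsub : ¬ 3 ∣ s - t) :
    HasSum (fun x : ℤ × ℤ ↦ winquistSummand u v s t x.1 x.2)
      (winquistTerm u v s t * qPochhammerInf X ^ 2) := by
  obtain ⟨c, hc, hj⟩ := exists_two_mul_eq_of_not_three_dvd hadd
  obtain ⟨d, hd, hi⟩ := exists_two_mul_eq_of_not_three_dvd hsub
  rw [winquistTerm, if_neg (by tauto), sq,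
    ← ((Equiv.addRight ((s + t) / 3)).prodCongr (Equiv.addRight ((s - t) / 3 + 1))).hasSum_iff]
  simpa only [Function.comp_def, Equiv.prodCongr_apply, Prod.map, Equiv.coe_addRight,
    winquistSummand_add u v hc hd hj hi] using
    (hasSum_mul (hasSum_pentagonal_mul hc) (hasSum_pentagonal_mul hd)).mul_left
      (winquistSummand u v s t ((s + t) / 3) ((s - t) / 3 + 1))

theorem eq_zero_of_hasSum_winquistSummand [CharZero K] {u v : K} {s t : ℤ} {a : K⟦X⟧}
    (ha : HasSum (fun x : ℤ × ℤ ↦ winquistSummand u v s t x.1 x.2) a)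
    (hst : 3 ∣ s + t ∨ 3 ∣ s - t) : a = 0 := by
  have : IsAddTorsionFree K⟦X⟧ := .of_module_rat _
  rcases hst with ⟨j, hj⟩ | ⟨i, hi⟩
  · exact eq_zero_of_hasSum_of_equiv ha ((Equiv.subLeft (2 * j - 1)).prodCongr (Equiv.refl ℤ))
      fun x ↦ winquistSummand_reflect_left u v hj x.1 x.2
  · exact eq_zero_of_hasSum_of_equiv ha ((Equiv.refl ℤ).prodCongr (Equiv.subLeft (2 * i + 1)))
      fun x ↦ winquistSummand_reflect_right u v hi x.1 x.2

theorem hasSum_winquistSummand {u v : K} (hu : u ≠ 0) (hv : v ≠ 0) :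
    HasSum (fun x : (ℤ × ℤ) × (ℤ × ℤ) ↦ winquistSummand u v x.1.1 x.1.2 x.2.1 x.2.2)
      (theta u * theta v * (theta (u * v) * theta (u / v))) := by
  let index : (ℤ × ℤ) × (ℤ × ℤ) ≃ (ℤ × ℤ) × (ℤ × ℤ) :=
    { toFun x := ((x.1.1 - x.2.1 - x.2.2, x.1.2 - 1 - x.2.1 + x.2.2), x.2)
      invFun x := ((x.1.1 + x.2.1 + x.2.2, x.1.2 + 1 + x.2.1 - x.2.2), x.2)
      left_inv x := by ext <;> simp <;> ring
      right_inv x := by ext <;> simp <;> ring }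
  simp only [← thetaTerm_mul_thetaTerm hu hv]
  exact index.hasSum_iff.2 <| hasSum_mul
    (hasSum_mul (hasSum_thetaTerm hu) (hasSum_thetaTerm hv))
    (hasSum_mul (hasSum_thetaTerm (mul_ne_zero hu hv)) (hasSum_thetaTerm (div_ne_zero hu hv)))

/-- Winquist's identity. -/
theorem hasSum_winquistTerm [CharZero K] {u v : K} (hu : u ≠ 0) (hv : v ≠ 0) :
    HasSum (fun x : ℤ × ℤ ↦ winquistTerm u v x.1 x.2 * qPochhammerInf X ^ 2)
      (theta u * theta v * (theta (u * v) * theta (u / v))) := by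
  have hsum := hasSum_winquistSummand hu hv
  refine hsum.prod_fiberwise fun ⟨s, t⟩ ↦ ?_
  by_cases hst : 3 ∣ s + t ∨ 3 ∣ s - t
  · have hfiber :=
      (summable_comp_of_injective hsum.summable (Prod.mk_right_injective (s, t))).hasSum
    rw [eq_zero_of_hasSum_winquistSummand hfiber hst] at hfiber
    simpa only [winquistTerm, if_pos hst, zero_mul] using hfiber
  · exact hasSum_winquistSummand_fiber u v (by tauto) (by tauto)

end Winquist

section Eleven

theorem dvd_of_winquistExponent {s t : ℤ} (hadd : ¬ 3 ∣ s + t) (hsub : ¬ 3 ∣ s - t)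
    (h : winquistExponent s t ((s + t) / 3) ((s - t) / 3 + 1) ≡ 6 [MOD 11]) :
    (11 : ℤ) ∣ t - s := by
  have hsix : (6 * winquistExponent s t ((s + t) / 3) ((s - t) / 3 + 1) : ZMod 11) =
      s ^ 2 - 3 * s + t ^ 2 - 3 * t + 2 := by
    exact_mod_cast congrArg (Int.cast : ℤ → ZMod 11) (six_mul_winquistExponent hadd hsub)
  rw [(ZMod.natCast_eq_natCast_iff _ _ 11).2 h] at hsix
  have hquad : ∀ s t : ZMod 11, 6 * (6 : ℕ) = s ^ 2 - 3 * s + t ^ 2 - 3 * t + 2 → t - s = 0 := by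
    decide
  refine (ZMod.intCast_zmod_eq_zero_iff_dvd _ 11).1 ?_
  exact_mod_cast hquad s t hsix

variable {K : Type*} [Field K]

theorem coeff_winquistTerm_swap {ζ : K} (hζ : IsPrimitiveRoot ζ 11) {n : ℕ}
    (hn : n ≡ 6 [MOD 11]) (s t : ℤ) :
    coeff n (winquistTerm (ζ ^ 5) (ζ ^ 2) t s) = -coeff n (winquistTerm (ζ ^ 5) (ζ ^ 2) s t) := by
  by_cases hst : 3 ∣ s + t ∨ 3 ∣ s - t
  · rw [winquistTerm, winquistTerm, if_pos hst, if_pos (by lia), map_zero, neg_zero]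
  obtain ⟨hadd, hsub⟩ := not_or.1 hst
  have hexp : winquistExponent t s ((t + s) / 3) ((t - s) / 3 + 1) =
      winquistExponent s t ((s + t) / 3) ((s - t) / 3 + 1) := by
    have h := six_mul_winquistExponent hadd hsub
    have h' := six_mul_winquistExponent (s := t) (t := s) (by lia) (by lia)
    lia
  rw [winquistTerm, winquistTerm, if_neg hst, if_neg (by lia), winquistSummand, winquistSummand,
    hexp, coeff_C_mul, coeff_C_mul, coeff_X_pow]
  split_ifs with h
  · have hodd : Odd (t + s - 1 - (t + s) / 3 + ((t - s) / 3 + 1) -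
        (s + t - 1 - (s + t) / 3 + ((s - t) / 3 + 1))) := ⟨-((s - t) / 3) - 1, by lia⟩
    have hpow : (ζ ^ 5) ^ t * (ζ ^ 2) ^ (s - 1) = (ζ ^ 5) ^ s * (ζ ^ 2) ^ (t - 1) := by
      have hone : ζ ^ (3 * (t - s)) = 1 := (hζ.zpow_eq_one_iff_dvd _).2 <|
        (dvd_of_winquistExponent hadd hsub (h ▸ hn)).mul_left 3
      have h0 : ζ ≠ 0 := hζ.ne_zero (by norm_num)
      rw [← mul_one ((ζ ^ 5) ^ s * _), ← hone]
      simp only [← zpow_natCast, ← zpow_mul, ← zpow_add₀ h0]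
      congr 1
      push_cast
      ring
    rw [neg_one_zpow_eq_neg hodd, hpow, neg_mul, neg_mul]
  · rw [mul_zero, mul_zero, neg_zero]

variable [CharZero K] [TopologicalSpace K] [DiscreteTopology K]

theorem coeff_theta_mul_eq_zero_eleven {ζ : K} (hζ : IsPrimitiveRoot ζ 11) {n : ℕ}
    (hn : n ≡ 6 [MOD 11]) :
    coeff n (theta (ζ ^ 5) * theta (ζ ^ 2) * (theta (ζ ^ 7) * theta (ζ ^ 3)) *
      (qPochhammerInf X)⁻¹ ^ 2) = 0 := by
  have h0 : ζ ≠ 0 := hζ.ne_zero (by norm_num)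
  have hadd : ζ ^ 5 * ζ ^ 2 = ζ ^ 7 := by ring
  have hsub : ζ ^ 5 / ζ ^ 2 = ζ ^ 3 := by field_simp
  have hsum := (hasSum_winquistTerm (pow_ne_zero 5 h0) (pow_ne_zero 2 h0)).mul_right
    ((qPochhammerInf X)⁻¹ ^ 2)
  simp only [mul_assoc _ (qPochhammerInf X ^ 2), ← mul_pow,
    qPochhammerInf_mul_inv (K := K) constantCoeff_X, one_pow, mul_one, hadd, hsub] at hsum
  exact eq_zero_of_hasSum_of_equiv ((WithPiTopology.hasSum_iff_hasSum_coeff K).1 hsum n)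
    (Equiv.prodComm ℤ ℤ) fun x ↦ coeff_winquistTerm_swap hζ hn x.1 x.2

theorem coeff_crankSeries_eleven {ζ : K} (hζ : IsPrimitiveRoot ζ 11) {n : ℕ}
    (hn : n ≡ 6 [MOD 11]) : coeff n (crankSeries ζ) = 0 := by
  have hone {j : ℕ} (hj : j ≠ 0) (hlt : j < 11) : 1 - ζ ^ j ≠ 0 :=
    sub_ne_zero.2 (hζ.pow_ne_one_of_pos_of_lt hj hlt).symm
  have hsymm : symmPochhammer (ζ ^ 7) = symmPochhammer (ζ ^ 4) := by
    have hmul : ζ ^ 7 * ζ ^ 4 = 1 := by rw [← pow_add, hζ.pow_eq_one]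
    rw [← symmPochhammer_inv, inv_eq_of_mul_eq_one_right hmul]
  refine coeff_crankSeries_eq_zero (h := 4)
    (c := (1 - ζ ^ 5) * (1 - ζ ^ 2) * ((1 - ζ ^ 7) * (1 - ζ ^ 3))) hζ
    (mul_ne_zero (mul_ne_zero (hone (by norm_num) (by norm_num)) (hone two_ne_zero (by norm_num)))
      (mul_ne_zero (hone (by norm_num) (by norm_num)) (hone three_ne_zero (by norm_num))))
    ?_ (fun n hn ↦ coeff_theta_mul_eq_zero_eleven hζ hn) hn
  have hpow : qPochhammerInf X ^ 4 * (qPochhammerInf X)⁻¹ ^ 2 = qPochhammerInf (X : K⟦X⟧) ^ 2 := by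
    rw [pow_add _ 2 2, mul_assoc, ← mul_pow, qPochhammerInf_mul_inv constantCoeff_X, one_pow,
      mul_one]
  rw [← hpow]
  simp only [theta_eq_C_mul, hsymm, map_mul, prod_range_succ, prod_range_zero]
  ring

end Eleven

section Equidistribution

theorem sum_range_pow_zpow {K : Type*} [Field K] {t : ℕ} {ζ : K} (hζ : IsPrimitiveRoot ζ t)
    (d : ℤ) : ∑ j ∈ range t, (ζ ^ j) ^ d = if (t : ℤ) ∣ d then (t : K) else 0 := by
  have hcomm (j : ℕ) : (ζ ^ j) ^ d = (ζ ^ d) ^ j := by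
    rw [← zpow_natCast, ← zpow_natCast, zpow_comm]
  simp only [hcomm]
  split_ifs with h
  · simp [(hζ.zpow_eq_one_iff_dvd d).2 h]
  · rw [geom_sum_eq ((hζ.zpow_eq_one_iff_dvd d).not.2 h), ← hcomm, hζ.pow_eq_one, one_zpow,
      sub_self, zero_div]

theorem card_modEq_of_sum_pow_zpow_eq_zero {α K : Type*} [Fintype α] [Field K] [CharZero K]
    {t : ℕ} (ht : t ≠ 0) {ζ : K} (hζ : IsPrimitiveRoot ζ t) {f : α → ℤ}
    (hf : ∀ j, 0 < j → j < t → ∑ a, (ζ ^ j) ^ f a = 0) (k : ℤ) :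
    (Nat.card {a // f a ≡ k [ZMOD t]} : ℚ) = Nat.card α / t := by
  have hdouble : ∑ a, ∑ j ∈ range t, (ζ ^ j) ^ (f a - k) = Fintype.card α := by
    rw [sum_comm, sum_eq_single_of_mem 0 (mem_range.2 (Nat.pos_of_ne_zero ht)) fun j hj hj0 ↦ ?_]
    · simp
    · simp only [zpow_sub₀ (pow_ne_zero j (hζ.ne_zero ht))]
      rw [← sum_div, hf j (Nat.pos_of_ne_zero hj0) (mem_range.1 hj), zero_div]
  have hmod (a : α) : f a ≡ k [ZMOD t] ↔ (t : ℤ) ∣ f a - k :=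
    Int.modEq_comm.trans Int.modEq_iff_dvd
  simp only [sum_range_pow_zpow hζ, ← hmod] at hdouble
  rw [← sum_filter, sum_const, nsmul_eq_mul, ← Fintype.card_subtype] at hdouble
  rw [eq_div_iff (Nat.cast_ne_zero.2 ht), Nat.card_eq_fintype_card, Nat.card_eq_fintype_card]
  exact_mod_cast hdouble

theorem card_crank_modEq {t n : ℕ} (ht : t.Prime)
    (h : ∀ ζ : ℂ, IsPrimitiveRoot ζ t → ∑ π : n.Partition, ζ ^ π.crank = 0) (k : ℤ) :
    (Nat.card {π : n.Partition // π.crank ≡ k [ZMOD t]} : ℚ) = Nat.card n.Partition / t := by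
  have hζ := Complex.isPrimitiveRoot_exp t ht.ne_zero
  exact card_modEq_of_sum_pow_zpow_eq_zero ht.ne_zero hζ (fun j hj hjt ↦
    h _ (hζ.pow_of_coprime j (Nat.coprime_of_lt_prime hj.ne' hjt ht).symm)) k

variable {K : Type*} [Field K] [CharZero K]

theorem sum_zpow_crank_five {ζ : K} (hζ : IsPrimitiveRoot ζ 5) (n : ℕ) :
    ∑ π : (5 * n + 4).Partition, ζ ^ π.crank = 0 := by
  let : TopologicalSpace K := ⊥
  have : DiscreteTopology K := ⟨rfl⟩
  rw [sum_zpow_crank (by lia) (hζ.ne_zero (by norm_num)),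
    coeff_crankSeries_five hζ (by simp [Nat.ModEq])]

theorem sum_zpow_crank_seven {ζ : K} (hζ : IsPrimitiveRoot ζ 7) (n : ℕ) :
    ∑ π : (7 * n + 5).Partition, ζ ^ π.crank = 0 := by
  let : TopologicalSpace K := ⊥
  have : DiscreteTopology K := ⟨rfl⟩
  rw [sum_zpow_crank (by lia) (hζ.ne_zero (by norm_num)),
    coeff_crankSeries_seven hζ (by simp [Nat.ModEq])]

theorem sum_zpow_crank_eleven {ζ : K} (hζ : IsPrimitiveRoot ζ 11) (n : ℕ) :
    ∑ π : (11 * n + 6).Partition, ζ ^ π.crank = 0 := by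
  let : TopologicalSpace K := ⊥
  have : DiscreteTopology K := ⟨rfl⟩
  rw [sum_zpow_crank (by lia) (hζ.ne_zero (by norm_num)),
    coeff_crankSeries_eleven hζ (by simp [Nat.ModEq])]

end Equidistribution

end AndrewsGarvan

/-- Andrews–Garvan: the crank witnesses all three Ramanujan congruences:
`M(k,5,5n+4) = p(5n+4)/5`, `M(k,7,7n+5) = p(7n+5)/7`, and `M(k,11,11n+6) = p(11n+6)/11`,
where `M(k,t,m)` counts partitions of `m` with crank congruent to `k` modulo `t`. -/
theorem andrews_garvan_crank (n : ℕ) :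
    (∀ k : ℤ, 0 ≤ k → k ≤ 4 →
      (Nat.card {π : Nat.Partition (5 * n + 4) // π.crank ≡ k [ZMOD 5]} : ℚ) =
        (Nat.card (Nat.Partition (5 * n + 4)) : ℚ) / 5) ∧
    (∀ k : ℤ, 0 ≤ k → k ≤ 6 →
      (Nat.card {π : Nat.Partition (7 * n + 5) // π.crank ≡ k [ZMOD 7]} : ℚ) =
        (Nat.card (Nat.Partition (7 * n + 5)) : ℚ) / 7) ∧
    (∀ k : ℤ, 0 ≤ k → k ≤ 10 →
      (Nat.card {π : Nat.Partition (11 * n + 6) // π.crank ≡ k [ZMOD 11]} : ℚ) =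
        (Nat.card (Nat.Partition (11 * n + 6)) : ℚ) / 11) := by
  refine ⟨fun k _ _ ↦ ?_, fun k _ _ ↦ ?_, fun k _ _ ↦ ?_⟩
  · exact AndrewsGarvan.card_crank_modEq Nat.prime_five
      (fun _ hζ ↦ AndrewsGarvan.sum_zpow_crank_five hζ n) k
  · exact AndrewsGarvan.card_crank_modEq Nat.prime_seven
      (fun _ hζ ↦ AndrewsGarvan.sum_zpow_crank_seven hζ n) k
  · exact AndrewsGarvan.card_crank_modEq Nat.prime_eleven
      (fun _ hζ ↦ AndrewsGarvan.sum_zpow_crank_eleven hζ n) k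
end
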